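/- arXiv:2403.15998 — 2 statements merged into one kernel-verified Lean document; each statement's English description precedes it below -/
import Mathlib

section
/- Consider the plant together with the observer ∂_t û_i + γ_i ∂_x û_i = Σ_{j=1}^3 σ_{ij} û_j + α_i(x) ŵ − p_i(x)(y(t) − ŵ(t,0)) for i = 1,2,3, ∂_t ŵ − μ ∂_x ŵ = Σ_{j=1}^3 θ_j(x) û_j − p_4(x)(y(t) − ŵ(t,0)), with boundary conditions û_i(t,0) = δ_i y(t) and ŵ(t,L) = ρ_1 û_1(t,L) + ρ_2 û_2(t,L) + U(t), where y(t) = w(t,0) is the measured output, the gains are p_i(x) = −μ m_i(x,0) for i = 1,2,3,4, and the output-feedback control law is U(t) = Σ_{i=1}^3 ∫_0^L k_i(L,ξ) û_i(t,ξ) dξ + ∫_0^L k_4(L,ξ) ŵ(t,ξ) dξ − ρ_1 û_1(t,L) − ρ_2 û_2(t,L). Then there exist constants M > 0 and λ > 0, depending only on L, γ_1, γ_2, γ_3, μ, the σ_{ij}, the functions α_i, θ_i, the δ_i, ρ_1, ρ_2 and the kernels k_1,…,k_4, m_1,…,m_4, such that for every collection of C¹ functions (u_1, u_2, u_3, w,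 û_1, û_2, û_3, ŵ) on [0,∞)×[0,L] satisfying the plant and observer equations, Σ_{i=1}^3 ‖u_i(t,·)‖² + ‖w(t,·)‖² + Σ_{i=1}^3 ‖û_i(t,·)‖² + ‖ŵ(t,·)‖² ≤ M e^{−λ t} ( Σ_{i=1}^3 ‖u_i(0,·)‖² + ‖w(0,·)‖² + Σ_{i=1}^3 ‖û_i(0,·)‖² + ‖ŵ(0,·)‖² ) for all t ≥ 0; that is, the combined observer–plant closed loop is exponentially stable in the L² sense. -/
/-!
The proof is infinite-dimensional backstepping followed by a Lyapunov estimate for a cascade of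
transport equations.

The observer error `u - hu`, `w - hw` is written as `w - hw = b + vol m₄ b` and
`u i - hu i = a i + vol (m i) b`, where `vol k φ x = ∫₀ˣ k x ξ φ ξ dξ`. The observer kernel
equations, after an integration by parts, remove all couplings from `b` to `a`: `observer_source`
says that `f = b_t - μ b_x` solves the Volterra equation `f + vol m₄ f = ∑ θ_j a_j`, and
`observer_target` says that `a_t + γ a_x = σ a - vol m f`. Moreover `a = 0` at `x = 0`, and `b` at
`x = L` is a combination of `a 0` and `a 1`. For the observer state,
`z = hw - ∑ vol (k i) (hu i) - vol k₄ hw` satisfies (`controller_target`) a pure transport equation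
forced only by the output error `e = b(t, 0)`, and the control law makes `z` vanish at `x = L`,
while `hu` is fed by `z` and `e`. The closed loop is therefore a one-way cascade
`a → b → z → hu`.

All energies are weighted: `wnorm L κ φ = ∫₀ᴸ exp (-κ x) φ x ^ 2 dx`, with weight `κ` for the
rightward families `a`, `hu` and `-κ` for the leftward `b`, `z`. For large `κ` the transport
produces arbitrarily strong decay, and `wnorm_vol` makes every Volterra operator with bounded
kernel a contraction, so that `1 ± vol k` is boundedly invertible (`wnorm_resolvent`) and all zero
order terms are absorbed (`energy_family`, `energy_left`). Each stage of the cascade then satisfies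
a dissipation inequality up to boundary and energy terms of the preceding stages
(`error_cascade`, `observer_cascade`), and `exists_weights` chooses weights for which the sum `V` of
the four energies satisfies `V' ≤ -V`. The change of variables is bounded with bounded
inverse (`target_equiv`), which carries the decay over to the original states.

Regularity is the delicate point in the change of variables: `b` must be differentiable to run the
energy estimate. `exists_vol_inverse` obtains this by solving the Volterra equation in a space of
continuous functions and differentiating the equation itself.
-/

open Set Filter Topology MeasureTheory

/-! ### Continuously differentiable functions and Volterra operators -/

/-- `φ` is continuously differentiable on the plane, with partial derivatives `φt` (first
variable) and `φx` (second variable). -/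
structure HasC1 (φ φt φx : ℝ → ℝ → ℝ) : Prop where
  cont : Continuous fun p : ℝ × ℝ => φ p.1 p.2
  contt : Continuous fun p : ℝ × ℝ => φt p.1 p.2
  contx : Continuous fun p : ℝ × ℝ => φx p.1 p.2
  ht : ∀ t x, HasDerivAt (fun τ => φ τ x) (φt t x) t
  hx : ∀ t x, HasDerivAt (fun y => φ t y) (φx t x) x

/-- The Volterra operator `φ ↦ ∫₀ˣ k x ξ φ ξ dξ`. -/
noncomputable def vol (k : ℝ → ℝ → ℝ) (φ : ℝ → ℝ) (x : ℝ) : ℝ := ∫ ξ in (0:ℝ)..x, k x ξ * φ ξ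

theorem HasC1.of_contDiff {φ : ℝ → ℝ → ℝ} (h : ContDiff ℝ 1 (Function.uncurry φ)) :
    HasC1 φ (fun t x => deriv (fun τ => φ τ x) t) (fun t x => deriv (fun y => φ t y) x) := by
  have hd : Differentiable ℝ (Function.uncurry φ) := h.differentiable (by norm_num)
  have hf : Continuous (fderiv ℝ (Function.uncurry φ)) := h.continuous_fderiv (by norm_num)
  have ht : ∀ t x, HasDerivAt (fun τ => φ τ x) (fderiv ℝ (Function.uncurry φ) (t, x) (1, 0)) t := by
    intro t x
    have h1 : HasDerivAt (fun τ : ℝ => (τ, x)) ((1:ℝ), (0:ℝ)) t :=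
      (hasDerivAt_id t).prodMk (hasDerivAt_const t x)
    exact (hd (t, x)).hasFDerivAt.comp_hasDerivAt t h1
  have hx : ∀ t x, HasDerivAt (fun y => φ t y) (fderiv ℝ (Function.uncurry φ) (t, x) (0, 1)) x := by
    intro t x
    have h1 : HasDerivAt (fun y : ℝ => (t, y)) ((0:ℝ), (1:ℝ)) x :=
      (hasDerivAt_const x t).prodMk (hasDerivAt_id x)
    exact (hd (t, x)).hasFDerivAt.comp_hasDerivAt x h1
  refine ⟨h.continuous, ?_, ?_, ?_, ?_⟩
  · have : (fun p : ℝ × ℝ => deriv (fun τ => φ τ p.2) p.1)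
        = fun p => fderiv ℝ (Function.uncurry φ) p (1, 0) := by
      funext p; exact (ht p.1 p.2).deriv
    rw [this]; fun_prop
  · have : (fun p : ℝ × ℝ => deriv (fun y => φ p.1 y) p.2)
        = fun p => fderiv ℝ (Function.uncurry φ) p (0, 1) := by
      funext p; exact (hx p.1 p.2).deriv
    rw [this]; fun_prop
  · intro t x; exact (ht t x).differentiableAt.hasDerivAt
  · intro t x; exact (hx t x).differentiableAt.hasDerivAt

theorem HasC1.sub {φ φt φx ψ ψt ψx : ℝ → ℝ → ℝ} (h : HasC1 φ φt φx) (g : HasC1 ψ ψt ψx) :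
    HasC1 (fun t x => φ t x - ψ t x) (fun t x => φt t x - ψt t x) (fun t x => φx t x - ψx t x) :=
  ⟨h.cont.sub g.cont, h.contt.sub g.contt, h.contx.sub g.contx,
    fun t x => (h.ht t x).sub (g.ht t x), fun t x => (h.hx t x).sub (g.hx t x)⟩

theorem HasC1.sum {ι : Type*} {s : Finset ι} {φ φt φx : ι → ℝ → ℝ → ℝ}
    (h : ∀ i, HasC1 (φ i) (φt i) (φx i)) :
    HasC1 (fun t x => ∑ i ∈ s, φ i t x) (fun t x => ∑ i ∈ s, φt i t x)
      (fun t x => ∑ i ∈ s, φx i t x) :=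
  ⟨continuous_finsetSum _ fun i _ => (h i).cont, continuous_finsetSum _ fun i _ => (h i).contt,
    continuous_finsetSum _ fun i _ => (h i).contx,
    fun t x => HasDerivAt.fun_sum fun i _ => (h i).ht t x,
    fun t x => HasDerivAt.fun_sum fun i _ => (h i).hx t x⟩

theorem cont_right {φ : ℝ → ℝ → ℝ} (h : Continuous fun p : ℝ × ℝ => φ p.1 p.2) (t : ℝ) :
    Continuous (φ t) := h.comp (by fun_prop : Continuous fun x : ℝ => (t, x))

theorem cont_left {φ : ℝ → ℝ → ℝ} (h : Continuous fun p : ℝ × ℝ => φ p.1 p.2) (x : ℝ) :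
    Continuous (fun t => φ t x) := h.comp (by fun_prop : Continuous fun t : ℝ => (t, x))

/-- Differentiation under the integral sign for jointly continuous derivatives. -/
theorem hasDerivAt_integral_param {g g' : ℝ → ℝ → ℝ}
    (hg : Continuous fun p : ℝ × ℝ => g p.1 p.2) (hg' : Continuous fun p : ℝ × ℝ => g' p.1 p.2)
    (hd : ∀ t ξ, HasDerivAt (fun τ => g τ ξ) (g' t ξ) t) (a b t : ℝ) :
    HasDerivAt (fun τ => ∫ ξ in a..b, g τ ξ) (∫ ξ in a..b, g' t ξ) t := by
  obtain ⟨C, hC⟩ := ((isCompact_Icc (a := t - 1) (b := t + 1)).prod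
    (isCompact_uIcc (a := a) (b := b))).exists_bound_of_continuousOn hg'.continuousOn
  refine (intervalIntegral.hasDerivAt_integral_of_dominated_loc_of_deriv_le
    (s := Icc (t - 1) (t + 1)) (bound := fun _ => C) (Icc_mem_nhds (by linarith) (by linarith))
    (Eventually.of_forall fun x => (cont_right hg x).aestronglyMeasurable)
    ((cont_right hg t).intervalIntegrable _ _) ((cont_right hg' t).aestronglyMeasurable)
    (Eventually.of_forall fun ξ hξ x hx => hC (x, ξ) ⟨hx, uIoc_subset_uIcc hξ⟩)
    (by simp) (Eventually.of_forall fun ξ _ x _ => hd x ξ)).2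

/-- Leibniz rule for an integral with variable upper limit. -/
theorem hasDerivAt_integral_leibniz {g g' : ℝ → ℝ → ℝ}
    (hg : Continuous fun p : ℝ × ℝ => g p.1 p.2) (hg' : Continuous fun p : ℝ × ℝ => g' p.1 p.2)
    (hd : ∀ t ξ, HasDerivAt (fun τ => g τ ξ) (g' t ξ) t) (x : ℝ) :
    HasDerivAt (fun y => ∫ ξ in (0:ℝ)..y, g y ξ) (g x x + ∫ ξ in (0:ℝ)..x, g' x ξ) x := by
  have h1 := hasDerivAt_integral_param hg hg' hd 0 x x
  have h2 : HasDerivAt (fun y => ∫ ξ in x..y, g y ξ) (g x x) x := by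
    rw [hasDerivAt_iff_isLittleO, Asymptotics.isLittleO_iff]
    intro ε hε
    obtain ⟨r, hr, hball⟩ := Metric.continuousAt_iff.1 (hg.continuousAt (x := (x, x))) ε hε
    filter_upwards [Metric.ball_mem_nhds x hr] with y hy
    have e : (∫ ξ in x..y, g y ξ) - (∫ ξ in x..x, g x ξ) - (y - x) • g x x
        = ∫ ξ in x..y, (g y ξ - g x x) := by
      rw [intervalIntegral.integral_sub ((cont_right hg y).intervalIntegrable _ _) (by simp)]
      simp
    rw [e]
    refine intervalIntegral.norm_integral_le_of_norm_le_const fun ξ hξ => ?_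
    have hy' : |y - x| < r := by simpa [Real.dist_eq] using hy
    have hξ' : |ξ - x| ≤ |y - x| :=
      abs_sub_left_of_mem_uIcc (uIoc_subset_uIcc hξ)
    have : dist (y, ξ) (x, x) < r := by
      rw [Prod.dist_eq, Real.dist_eq, Real.dist_eq]; exact max_lt hy' (hξ'.trans_lt hy')
    simpa [Real.dist_eq] using (hball this).le
  have h3 := h2.add h1
  refine h3.congr_of_eventuallyEq (Eventually.of_forall fun y => ?_)
  simp only [Pi.add_apply]
  rw [add_comm, intervalIntegral.integral_add_adjacent_intervals] <;>
  exact (cont_right hg y).intervalIntegrable _ _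

theorem continuous_vol {k φ : ℝ → ℝ → ℝ} (hk : Continuous fun p : ℝ × ℝ => k p.1 p.2)
    (hφ : Continuous fun p : ℝ × ℝ => φ p.1 p.2) :
    Continuous fun p : ℝ × ℝ => vol k (φ p.1) p.2 := by
  unfold vol
  refine intervalIntegral.continuous_parametric_intervalIntegral_of_continuous
    (f := fun (p : ℝ × ℝ) ξ => k p.2 ξ * φ p.1 ξ) ?_ continuous_snd
  exact (hk.comp (by fun_prop : Continuous fun q : (ℝ × ℝ) × ℝ => (q.1.2, q.2))).mul
    (hφ.comp (by fun_prop : Continuous fun q : (ℝ × ℝ) × ℝ => (q.1.1, q.2)))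

theorem continuous_vol' {k : ℝ → ℝ → ℝ} {φ : ℝ → ℝ} (hk : Continuous fun p : ℝ × ℝ => k p.1 p.2)
    (hφ : Continuous φ) : Continuous (vol k φ) :=
  (continuous_vol (φ := fun _ => φ) hk (hφ.comp continuous_snd)).comp
    (by fun_prop : Continuous fun x : ℝ => ((0 : ℝ), x))

/-- The Volterra operator, applied at each time, preserves `C¹` functions; no derivative of `φ` in
its second variable is needed. -/
theorem hasC1_vol {k ks kx φ φt : ℝ → ℝ → ℝ} (hk : HasC1 k kx ks)
    (hφ : Continuous fun p : ℝ × ℝ => φ p.1 p.2) (hφt : Continuous fun p : ℝ × ℝ => φt p.1 p.2)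
    (hd : ∀ t x, HasDerivAt (fun τ => φ τ x) (φt t x) t) :
    HasC1 (fun t x => vol k (φ t) x) (fun t x => vol k (φt t) x)
      (fun t x => k x x * φ t x + vol kx (φ t) x) := by
  refine ⟨continuous_vol hk.cont hφ, continuous_vol hk.cont hφt, ?_, ?_, ?_⟩
  · exact ((hk.cont.comp (by fun_prop : Continuous fun q : ℝ × ℝ => (q.2, q.2))).mul hφ).add
      (continuous_vol hk.contt hφ)
  · intro t x
    refine hasDerivAt_integral_param (g := fun t ξ => k x ξ * φ t ξ)
      (g' := fun t ξ => k x ξ * φt t ξ) ?_ ?_ ?_ 0 x t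
    · exact (hk.cont.comp (by fun_prop : Continuous fun q : ℝ × ℝ => (x, q.2))).mul hφ
    · exact (hk.cont.comp (by fun_prop : Continuous fun q : ℝ × ℝ => (x, q.2))).mul hφt
    · exact fun t ξ => (hd t ξ).const_mul _
  · intro t x
    refine hasDerivAt_integral_leibniz (g := fun x ξ => k x ξ * φ t ξ)
      (g' := fun x ξ => kx x ξ * φ t ξ) ?_ ?_ ?_ x
    · exact hk.cont.mul (hφ.comp (by fun_prop : Continuous fun q : ℝ × ℝ => (t, q.2)))
    · exact hk.contt.mul (hφ.comp (by fun_prop : Continuous fun q : ℝ × ℝ => (t, q.2)))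
    · exact fun x ξ => (hk.ht x ξ).mul_const _

/-- Integration by parts moves the space derivative from `φ` to the kernel. -/
theorem vol_ibp {k ks kx : ℝ → ℝ → ℝ} {φ φx : ℝ → ℝ} (hk : HasC1 k kx ks)
    (hφ : ∀ x, HasDerivAt φ (φx x) x) (hφx : Continuous φx) (x : ℝ) :
    vol k φx x = k x x * φ x - k x 0 * φ 0 - vol ks φ x := by
  unfold vol
  exact intervalIntegral.integral_mul_deriv_eq_deriv_mul (fun ξ _ => hk.hx x ξ) (fun ξ _ => hφ ξ)
    ((cont_right hk.contx x).intervalIntegrable _ _) (hφx.intervalIntegrable _ _)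

/-- A pointwise linear relation between integrands passes to the integrals. -/
theorem integral_linear {n : ℕ} (c : Fin n → ℝ) (F : Fin n → ℝ → ℝ) (hF : ∀ i, Continuous (F i))
    {x : ℝ} (hx : 0 ≤ x) (h : ∀ ξ, 0 ≤ ξ → ξ ≤ x → ∑ i, c i * F i ξ = 0) :
    ∑ i, c i * ∫ ξ in (0:ℝ)..x, F i ξ = 0 := by
  have : ∫ ξ in (0:ℝ)..x, ∑ i, c i * F i ξ = 0 := by
    rw [intervalIntegral.integral_congr (g := fun _ => 0)]
    · simp
    · intro ξ hξ
      rw [uIcc_of_le hx] at hξ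
      exact h ξ hξ.1 hξ.2
  rw [intervalIntegral.integral_finsetSum] at this
  · simpa [intervalIntegral.integral_const_mul] using this
  · exact fun i _ => ((hF i).const_mul _).intervalIntegrable _ _

/-! ### Inverting a Volterra transformation within `C¹` -/

/-- The Volterra operator on `C([0,L])`; functions are extended constantly outside `[0,L]`. -/
noncomputable def volCM {L : ℝ} (hL : 0 ≤ L) (k : ℝ → ℝ → ℝ)
    (hk : Continuous fun p : ℝ × ℝ => k p.1 p.2) (h : C(Icc (0:ℝ) L, ℝ)) : C(Icc (0:ℝ) L, ℝ) :=
  ⟨fun x => vol k (IccExtend hL h) x,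
    (continuous_vol' hk h.continuous.Icc_extend').comp continuous_subtype_val⟩

/-- After conjugation by `exp (K x)` the kernel gains the factor `exp (-K (x - ξ))`, which makes the
operator norm on `C([0,L])` of order `1 / K`. -/
theorem volCM_bound {L : ℝ} (hL : 0 ≤ L) {k : ℝ → ℝ → ℝ}
    (hk : Continuous fun p : ℝ × ℝ => k p.1 p.2) {C K : ℝ} (hC : 0 ≤ C) (hK : 0 < K)
    (hb : ∀ x ξ, 0 ≤ ξ → ξ ≤ x → x ≤ L → |k x ξ| ≤ C * Real.exp (-K * (x - ξ)))
    (h : C(Icc (0:ℝ) L, ℝ)) : ‖volCM hL k hk h‖ ≤ C / K * ‖h‖ := by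
  rw [ContinuousMap.norm_le _ (by positivity)]
  rintro ⟨x, hx0, hxL⟩
  have e : ∀ ξ, HasDerivAt (fun ξ => Real.exp (-K * (x - ξ)) * (C * ‖h‖ / K))
      (C * Real.exp (-K * (x - ξ)) * ‖h‖) ξ := by
    intro ξ
    have := ((((hasDerivAt_id ξ).const_sub x).const_mul (-K)).exp).mul_const (C * ‖h‖ / K)
    refine this.congr_deriv ?_
    simp only [id]
    field_simp
  have hi := intervalIntegral.integral_eq_sub_of_hasDerivAt (a := 0) (b := x)
    (fun ξ _ => e ξ) (Continuous.intervalIntegrable (by fun_prop) _ _)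
  change ‖∫ ξ in (0:ℝ)..x, k x ξ * IccExtend hL h ξ‖ ≤ _
  refine (intervalIntegral.norm_integral_le_of_norm_le
    (g := fun ξ => C * Real.exp (-K * (x - ξ)) * ‖h‖) hx0 (Eventually.of_forall fun ξ hξ => ?_)
    (Continuous.intervalIntegrable (by fun_prop) _ _)).trans ?_
  · rw [norm_mul]
    exact mul_le_mul (hb x ξ hξ.1.le hξ.2 hxL) (h.norm_coe_le_norm _) (norm_nonneg _)
      (by positivity)
  · rw [hi]
    have : 0 ≤ Real.exp (-K * (x - 0)) * (C * ‖h‖ / K) := by positivity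
    have e2 : Real.exp (-K * (x - x)) * (C * ‖h‖ / K) = C / K * ‖h‖ := by
      simp; ring
    linarith

/-- A second-kind Volterra equation with a `C¹` family of right-hand sides has a solution that is
`C¹` in the parameter.  After the conjugation by `exp (K x)` with `K` large, the Volterra operator
on `C([0,L])` has norm less than one. -/
theorem exists_vol_solution {L : ℝ} (hL : 0 ≤ L) {k φ φt : ℝ → ℝ → ℝ}
    (hk : Continuous fun p : ℝ × ℝ => k p.1 p.2)
    (hφ : Continuous fun p : ℝ × ℝ => φ p.1 p.2) (hφt : Continuous fun p : ℝ × ℝ => φt p.1 p.2)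
    (hd : ∀ t x, HasDerivAt (fun τ => φ τ x) (φt t x) t) :
    ∃ β βt : ℝ → ℝ → ℝ, (Continuous fun p : ℝ × ℝ => β p.1 p.2) ∧
      (Continuous fun p : ℝ × ℝ => βt p.1 p.2) ∧
      (∀ t x, HasDerivAt (fun τ => β τ x) (βt t x) t) ∧
      ∀ t, ∀ x, 0 ≤ x → x ≤ L → φ t x = β t x + vol k (β t) x := by
  obtain ⟨C, hC⟩ := ((isCompact_Icc (a := (0:ℝ)) (b := L)).prod
    (isCompact_Icc (a := (0:ℝ)) (b := L))).exists_bound_of_continuousOn hk.continuousOn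
  have hC0 : 0 ≤ C := (norm_nonneg _).trans (hC (0, 0) ⟨⟨le_rfl, hL⟩, ⟨le_rfl, hL⟩⟩)
  set K := C + 1 with hKdef
  have hK : 0 < K := by positivity
  let kb : ℝ → ℝ → ℝ := fun x ξ => Real.exp (-K * (x - ξ)) * k x ξ
  have hkb : Continuous fun p : ℝ × ℝ => kb p.1 p.2 := by
    exact (by fun_prop : Continuous fun p : ℝ × ℝ => Real.exp (-K * (p.1 - p.2))).mul hk
  have hbound := volCM_bound hL hkb hC0 hK (fun x ξ h0 h1 h2 => by
    have := hC (x, ξ) ⟨⟨h0.trans h1, h2⟩, ⟨h0, h1.trans h2⟩⟩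
    simp only [kb, abs_mul, Real.abs_exp]
    rw [mul_comm]
    exact mul_le_mul_of_nonneg_right this (Real.exp_nonneg _))
  let T : C(Icc (0:ℝ) L, ℝ) →L[ℝ] C(Icc (0:ℝ) L, ℝ) :=
    LinearMap.mkContinuous
      { toFun := volCM hL kb hkb
        map_add' := by
          intro f g
          ext x
          change vol _ _ _ = vol _ _ _ + vol _ _ _
          unfold vol
          rw [← intervalIntegral.integral_add]
          · refine intervalIntegral.integral_congr fun ξ _ => ?_
            simp [IccExtend, mul_add]
          · exact ((cont_right hkb x).mul f.continuous.Icc_extend').intervalIntegrable _ _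
          · exact ((cont_right hkb x).mul g.continuous.Icc_extend').intervalIntegrable _ _
        map_smul' := by
          intro c f
          ext x
          change vol _ _ _ = c * vol _ _ _
          unfold vol
          rw [← intervalIntegral.integral_const_mul]
          refine intervalIntegral.integral_congr fun ξ _ => ?_
          simp [IccExtend]; ring } (C / K) hbound
  have hT : ‖-T‖ < 1 := by
    refine lt_of_eq_of_lt (norm_neg T) ?_
    refine (LinearMap.mkContinuous_norm_le _ (by positivity) _).trans_lt ?_
    rw [div_lt_one hK]; linarith
  let u := Units.oneSub (-T) hT
  let S : C(Icc (0:ℝ) L, ℝ) →L[ℝ] C(Icc (0:ℝ) L, ℝ) := (u⁻¹ : _)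
  have hS : ∀ f, S f + T (S f) = f := by
    intro f
    have : (u : C(Icc (0:ℝ) L, ℝ) →L[ℝ] C(Icc (0:ℝ) L, ℝ)) * S = 1 := u.mul_inv
    have h2 := congrArg (fun A => A f) this
    simpa [u] using h2
  -- The rescaled right-hand side as a curve in `C([0,L])`, and its derivative.
  let W : ℝ → C(Icc (0:ℝ) L, ℝ) := fun t => ⟨fun x => Real.exp (-K * x) * φ t x, by
    have := cont_right hφ t; fun_prop⟩
  let Wt : ℝ → C(Icc (0:ℝ) L, ℝ) := fun t => ⟨fun x => Real.exp (-K * x) * φt t x, by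
    have := cont_right hφt t; fun_prop⟩
  have hWt : Continuous Wt := by
    refine ContinuousMap.continuous_of_continuous_uncurry _ ?_
    have h1 := hφt.comp (by fun_prop : Continuous fun p : ℝ × Icc (0:ℝ) L => (p.1, (p.2 : ℝ)))
    exact (by fun_prop : Continuous fun p : ℝ × Icc (0:ℝ) L => Real.exp (-K * p.2)).mul h1
  have hWd : ∀ t, HasDerivAt W (Wt t) t := by
    intro t
    have e : W = fun t => W 0 + ∫ s in (0:ℝ)..t, Wt s := by
      funext t
      ext x
      have h1 : (∫ s in (0:ℝ)..t, Wt s) x = ∫ s in (0:ℝ)..t, Wt s x :=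
        ((ContinuousMap.evalCLM ℝ x).intervalIntegral_comp_comm
          (hWt.intervalIntegrable 0 t)).symm
      rw [ContinuousMap.add_apply, h1]
      have h2 := intervalIntegral.integral_eq_sub_of_hasDerivAt (a := 0) (b := t)
        (f := fun s => W s x) (f' := fun s => Wt s x)
        (fun s _ => (hd s x).const_mul (Real.exp (-K * x)))
        (((ContinuousMap.evalCLM ℝ x).continuous.comp hWt).intervalIntegrable _ _)
      rw [h2]; ring
    rw [e]
    exact (intervalIntegral.integral_hasDerivAt_right (hWt.intervalIntegrable _ _)
      (hWt.stronglyMeasurableAtFilter _ _) hWt.continuousAt).const_add _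
  have hW : Continuous W := continuous_iff_continuousAt.2 fun t => (hWd t).continuousAt
  have hext : ∀ V : ℝ → C(Icc (0:ℝ) L, ℝ), Continuous V → Continuous fun p : ℝ × ℝ =>
      Real.exp (K * p.2) * S (V p.1) (projIcc 0 L hL p.2) := by
    intro V hV
    have : Continuous fun p : ℝ × ℝ => S (V p.1) (projIcc 0 L hL p.2) :=
      ContinuousEval.continuous_eval.comp
        ((S.continuous.comp (hV.comp continuous_fst)).prodMk
          ((continuous_projIcc (h := hL)).comp continuous_snd))
    fun_prop
  refine ⟨fun t x => Real.exp (K * x) * S (W t) (projIcc 0 L hL x),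
    fun t x => Real.exp (K * x) * S (Wt t) (projIcc 0 L hL x), hext W hW, hext Wt hWt, ?_, ?_⟩
  · intro t x
    have h1 : HasDerivAt (fun t => S (W t)) (S (Wt t)) t := S.hasFDerivAt.comp_hasDerivAt t (hWd t)
    have h2 := (ContinuousMap.evalCLM ℝ (projIcc 0 L hL x)).hasFDerivAt.comp_hasDerivAt t h1
    exact h2.const_mul _
  · intro t x h0 h1
    have h2 := congrArg (fun f => Real.exp (K * x) * f ⟨x, h0, h1⟩) (hS (W t))
    simp only [ContinuousMap.add_apply] at h2
    have h3 : T (S (W t)) ⟨x, h0, h1⟩ = vol kb (IccExtend hL (S (W t))) x := rfl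
    have h4 : W t ⟨x, h0, h1⟩ = Real.exp (-K * x) * φ t x := rfl
    rw [h3, h4, ← mul_assoc, ← Real.exp_add] at h2
    beta_reduce
    rw [projIcc_of_mem hL ⟨h0, h1⟩]
    have h5 : Real.exp (K * x) * vol kb (IccExtend hL (S (W t))) x
        = vol k (fun x => Real.exp (K * x) * S (W t) (projIcc 0 L hL x)) x := by
      unfold vol
      rw [← intervalIntegral.integral_const_mul]
      refine intervalIntegral.integral_congr fun ξ _ => ?_
      simp only [kb, IccExtend, Function.comp]
      have : Real.exp (K * ξ) = Real.exp (K * x) * Real.exp (-K * (x - ξ)) := by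
        rw [← Real.exp_add]; congr 1; ring
      rw [this]; ring
    rw [← h5]
    have : K * x + -K * x = 0 := by ring
    rw [this, Real.exp_zero] at h2
    linarith

/-- The Volterra transformation `b ↦ b + vol k b` can be inverted on `[0,L]` within `C¹` functions.
Both partial derivatives of the identity are recorded. -/
theorem exists_vol_inverse {L : ℝ} (hL : 0 ≤ L) {k kx ks φ φt φx : ℝ → ℝ → ℝ}
    (hk : HasC1 k kx ks) (hφ : HasC1 φ φt φx) :
    ∃ b bt bx : ℝ → ℝ → ℝ, HasC1 b bt bx ∧ ∀ t x, 0 ≤ x → x ≤ L →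
      φ t x = b t x + vol k (b t) x ∧ φt t x = bt t x + vol k (bt t) x ∧
      φx t x = bx t x + (k x x * b t x + vol kx (b t) x) := by
  obtain ⟨β, βt, hβ, hβt, hβd, heq⟩ := exists_vol_solution hL hk.cont hφ.cont hφ.contt hφ.ht
  have hV := hasC1_vol hk hβ hβt hβd
  have hb := hφ.sub hV
  -- `β` is only controlled on `[0,L]`; redefining it through the equation makes it `C¹` in `x`.
  have hcongr : ∀ (l : ℝ → ℝ → ℝ) (f g : ℝ → ℝ) x, 0 ≤ x → x ≤ L →
      (∀ ξ, 0 ≤ ξ → ξ ≤ L → f ξ = g ξ) → vol l f x = vol l g x := by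
    intro l f g x h0 h1 h
    unfold vol
    refine intervalIntegral.integral_congr fun ξ hξ => ?_
    rw [uIcc_of_le h0] at hξ
    simp only [h ξ hξ.1 (hξ.2.trans h1)]
  have hbβ : ∀ t x, 0 ≤ x → x ≤ L → φ t x - vol k (β t) x = β t x := by
    intro t x h0 h1
    linarith [heq t x h0 h1]
  have hbβt : ∀ t x, 0 ≤ x → x ≤ L → φt t x - vol k (βt t) x = βt t x := by
    intro t x h0 h1
    have h2 := (hb.ht t x).congr_of_eventuallyEq (f₁ := fun τ => β τ x)
      (Eventually.of_forall fun τ => (hbβ τ x h0 h1).symm)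
    exact h2.unique (hβd t x)
  refine ⟨_, _, _, hb, fun t x h0 h1 => ⟨?_, ?_, ?_⟩⟩
  · rw [hcongr k _ (β t) x h0 h1 (hbβ t)]; ring
  · rw [hcongr k _ (βt t) x h0 h1 (hbβt t)]; ring
  · rw [hcongr kx _ (β t) x h0 h1 (hbβ t), hbβ t x h0 h1]; ring

/-! ### Weighted `L²` norms and the transport energy estimate -/

/-- Squared `L²(0,L)` norm with weight `exp (-κ x)`. -/
noncomputable def wnorm (L κ : ℝ) (φ : ℝ → ℝ) : ℝ :=
  ∫ x in (0:ℝ)..L, Real.exp (-κ * x) * φ x ^ 2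

theorem wnorm_nonneg {L : ℝ} (hL : 0 ≤ L) (κ : ℝ) (φ : ℝ → ℝ) : 0 ≤ wnorm L κ φ :=
  intervalIntegral.integral_nonneg hL fun _ _ => by positivity

theorem wnorm_le_three {L : ℝ} (hL : 0 ≤ L) (κ : ℝ) {φ χ₁ χ₂ : ℝ → ℝ} {ψ : Fin 3 → ℝ → ℝ}
    (hφ : Continuous φ) (hψ : ∀ i, Continuous (ψ i)) (h₁ : Continuous χ₁) (h₂ : Continuous χ₂)
    (c c₁ c₂ : ℝ)
    (h : ∀ x, 0 ≤ x → x ≤ L →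
      φ x ^ 2 ≤ c * (∑ i, ψ i x ^ 2) + c₁ * χ₁ x ^ 2 + c₂ * χ₂ x ^ 2) :
    wnorm L κ φ ≤ c * (∑ i, wnorm L κ (ψ i)) + c₁ * wnorm L κ χ₁ + c₂ * wnorm L κ χ₂ := by
  have e : c * (∑ i, wnorm L κ (ψ i)) + c₁ * wnorm L κ χ₁ + c₂ * wnorm L κ χ₂
      = ∫ x in (0:ℝ)..L, Real.exp (-κ * x) *
        (c * (∑ i, ψ i x ^ 2) + c₁ * χ₁ x ^ 2 + c₂ * χ₂ x ^ 2) := by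
    unfold wnorm
    rw [← intervalIntegral.integral_finsetSum, ← intervalIntegral.integral_const_mul,
      ← intervalIntegral.integral_const_mul, ← intervalIntegral.integral_const_mul,
      ← intervalIntegral.integral_add, ← intervalIntegral.integral_add]
    · refine intervalIntegral.integral_congr fun x _ => ?_
      simp only [← Finset.mul_sum]; ring
    all_goals first
      | exact fun i _ => Continuous.intervalIntegrable (by fun_prop) _ _
      | exact Continuous.intervalIntegrable (by fun_prop) _ _
  rw [e]
  exact intervalIntegral.integral_mono_on hL (Continuous.intervalIntegrable (by fun_prop) _ _)
    (Continuous.intervalIntegrable (by fun_prop) _ _) fun x hx =>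
      mul_le_mul_of_nonneg_left (h x hx.1 hx.2) (Real.exp_nonneg _)

theorem wnorm_le_two {L : ℝ} (hL : 0 ≤ L) (κ : ℝ) {φ χ₁ χ₂ : ℝ → ℝ}
    (hφ : Continuous φ) (h₁ : Continuous χ₁) (h₂ : Continuous χ₂) (c₁ c₂ : ℝ)
    (h : ∀ x, 0 ≤ x → x ≤ L → φ x ^ 2 ≤ c₁ * χ₁ x ^ 2 + c₂ * χ₂ x ^ 2) :
    wnorm L κ φ ≤ c₁ * wnorm L κ χ₁ + c₂ * wnorm L κ χ₂ := by
  have := wnorm_le_three hL κ (ψ := fun _ => φ) hφ (fun _ => hφ) h₁ h₂ 0 c₁ c₂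
    (by intro x h0 h1; simpa using h x h0 h1)
  simpa using this

theorem wnorm_const {L : ℝ} (hL : 0 ≤ L) {κ : ℝ} (hκ : 0 ≤ κ) (c : ℝ) :
    wnorm L κ (fun _ => c) ≤ L * c ^ 2 := by
  have : wnorm L κ (fun _ => c) ≤ ∫ x in (0:ℝ)..L, c ^ 2 := by
    refine intervalIntegral.integral_mono_on hL (Continuous.intervalIntegrable (by fun_prop) _ _)
      (by simp) fun x hx => ?_
    have : Real.exp (-κ * x) ≤ 1 := Real.exp_le_one_iff.2 (by nlinarith [hκ, hx.1])
    nlinarith [sq_nonneg c]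
  simpa using this

/-- Comparison of two exponential weights on `[0,L]`. -/
theorem wnorm_weight {L κ κ' : ℝ} (hL : 0 ≤ L) {φ : ℝ → ℝ} (hφ : Continuous φ) :
    wnorm L κ φ ≤ Real.exp (|κ - κ'| * L) * wnorm L κ' φ := by
  unfold wnorm
  rw [← intervalIntegral.integral_const_mul]
  refine intervalIntegral.integral_mono_on hL (Continuous.intervalIntegrable (by fun_prop) _ _)
      (Continuous.intervalIntegrable (by fun_prop) _ _) fun x hx => ?_
  rw [← mul_assoc, ← Real.exp_add]
  refine mul_le_mul_of_nonneg_right (Real.exp_le_exp.2 ?_) (sq_nonneg _)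
  have h1 : (κ' - κ) * x ≤ |κ - κ'| * L := by
    rw [abs_sub_comm]
    exact (mul_le_mul_of_nonneg_right (le_abs_self _) hx.1).trans
      (mul_le_mul_of_nonneg_left hx.2 (abs_nonneg _))
  linarith

theorem wnorm_anti {L κ κ' : ℝ} (hL : 0 ≤ L) (h : κ ≤ κ') {φ : ℝ → ℝ} (hφ : Continuous φ) :
    wnorm L κ' φ ≤ wnorm L κ φ := by
  unfold wnorm
  refine intervalIntegral.integral_mono_on hL (Continuous.intervalIntegrable (by fun_prop) _ _)
      (Continuous.intervalIntegrable (by fun_prop) _ _) fun x hx => ?_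
  refine mul_le_mul_of_nonneg_right (Real.exp_le_exp.2 ?_) (sq_nonneg _)
  nlinarith [hx.1]

theorem sq_integral_le {x : ℝ} (hx : 0 ≤ x) {g : ℝ → ℝ} (hg : Continuous g) :
    (∫ ξ in (0:ℝ)..x, g ξ) ^ 2 ≤ x * ∫ ξ in (0:ℝ)..x, g ξ ^ 2 := by
  rcases hx.eq_or_lt with rfl | hx
  · simp
  set J := ∫ ξ in (0:ℝ)..x, g ξ
  have h0 : 0 ≤ ∫ ξ in (0:ℝ)..x, (x * g ξ - J) ^ 2 :=
    intervalIntegral.integral_nonneg hx.le fun _ _ => sq_nonneg _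
  have h1 : ∫ ξ in (0:ℝ)..x, (x * g ξ - J) ^ 2
      = x ^ 2 * (∫ ξ in (0:ℝ)..x, g ξ ^ 2) - 2 * x * J * J + x * J ^ 2 := by
    have : ∀ ξ, (x * g ξ - J) ^ 2 = x ^ 2 * g ξ ^ 2 - 2 * x * J * g ξ + J ^ 2 := fun ξ => by ring
    simp only [this]
    rw [intervalIntegral.integral_add, intervalIntegral.integral_sub,
      intervalIntegral.integral_const_mul, intervalIntegral.integral_const_mul]
    · simp [J]
    all_goals exact Continuous.intervalIntegrable (by fun_prop) _ _
  rw [h1] at h0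
  have : 0 ≤ x * (x * (∫ ξ in (0:ℝ)..x, g ξ ^ 2) - J ^ 2) := by linarith
  linarith [nonneg_of_mul_nonneg_right this hx]

/-- Large weights make a Volterra operator a contraction. -/
theorem wnorm_vol {L κ C : ℝ} (hL : 0 ≤ L) (hκC : 4 * C ^ 2 * L ≤ κ)
    {k : ℝ → ℝ → ℝ} (hk : Continuous fun p : ℝ × ℝ => k p.1 p.2)
    (hb : ∀ x ξ, 0 ≤ ξ → ξ ≤ x → x ≤ L → |k x ξ| ≤ C) {φ : ℝ → ℝ} (hφ : Continuous φ) :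
    wnorm L κ (vol k φ) ≤ 1 / 4 * wnorm L κ φ := by
  let F : ℝ → ℝ := fun x => ∫ ξ in (0:ℝ)..x, φ ξ ^ 2
  have hF : ∀ x, HasDerivAt F (φ x ^ 2) x := fun x =>
    intervalIntegral.integral_hasDerivAt_right (Continuous.intervalIntegrable (by fun_prop) _ _)
      (Continuous.stronglyMeasurableAtFilter (by fun_prop) _ _) (by fun_prop)
  have hFc : Continuous F := continuous_iff_continuousAt.2 fun x => (hF x).continuousAt
  have hV := continuous_vol' hk hφ
  have hpt : ∀ x, 0 ≤ x → x ≤ L → vol k φ x ^ 2 ≤ C ^ 2 * L * F x := by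
    intro x h0 h1
    have hkx := cont_right hk x
    refine (sq_integral_le h0 (hkx.mul hφ)).trans ?_
    have h2 : ∫ ξ in (0:ℝ)..x, (k x ξ * φ ξ) ^ 2 ≤ C ^ 2 * F x := by
      change _ ≤ C ^ 2 * ∫ ξ in (0:ℝ)..x, φ ξ ^ 2
      rw [← intervalIntegral.integral_const_mul]
      refine intervalIntegral.integral_mono_on h0 (Continuous.intervalIntegrable (by fun_prop) _ _)
        (Continuous.intervalIntegrable (by fun_prop) _ _) fun ξ hξ => ?_
      rw [mul_pow]
      exact mul_le_mul_of_nonneg_right (sq_le_sq' (abs_le.1 (hb x ξ hξ.1 hξ.2 h1)).1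
        (abs_le.1 (hb x ξ hξ.1 hξ.2 h1)).2) (sq_nonneg _)
    have hF0 : 0 ≤ F x := intervalIntegral.integral_nonneg h0 fun _ _ => sq_nonneg _
    have h3 : 0 ≤ C ^ 2 * F x := by positivity
    calc _ ≤ x * (C ^ 2 * F x) := mul_le_mul_of_nonneg_left h2 h0
      _ ≤ L * (C ^ 2 * F x) := mul_le_mul_of_nonneg_right h1 h3
      _ = _ := by ring
  have hI : κ * (∫ x in (0:ℝ)..L, Real.exp (-κ * x) * F x) ≤ wnorm L κ φ := by
    have hd : ∀ x, HasDerivAt (fun x => Real.exp (-κ * x) * F x)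
        (Real.exp (-κ * x) * φ x ^ 2 - κ * (Real.exp (-κ * x) * F x)) x := by
      intro x
      have := (((hasDerivAt_id x).const_mul (-κ)).exp).mul (hF x)
      refine this.congr_deriv ?_
      simp only [id]; ring
    have h1 := intervalIntegral.integral_eq_sub_of_hasDerivAt (a := 0) (b := L)
      (fun x _ => hd x) (Continuous.intervalIntegrable (by fun_prop) _ _)
    rw [intervalIntegral.integral_sub (Continuous.intervalIntegrable (by fun_prop) _ _)
      (Continuous.intervalIntegrable (by fun_prop) _ _), intervalIntegral.integral_const_mul] at h1
    have h2 : F 0 = 0 := by simp [F]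
    have h3 : 0 ≤ Real.exp (-κ * L) * F L :=
      mul_nonneg (Real.exp_nonneg _)
        (intervalIntegral.integral_nonneg hL fun _ _ => sq_nonneg _)
    rw [h2] at h1
    unfold wnorm
    linarith
  have hJ : 0 ≤ ∫ x in (0:ℝ)..L, Real.exp (-κ * x) * F x :=
    intervalIntegral.integral_nonneg hL fun x hx => mul_nonneg (Real.exp_nonneg _)
      (intervalIntegral.integral_nonneg hx.1 fun _ _ => sq_nonneg _)
  have h4 : wnorm L κ (vol k φ) ≤ C ^ 2 * L * ∫ x in (0:ℝ)..L, Real.exp (-κ * x) * F x := by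
    unfold wnorm
    rw [← intervalIntegral.integral_const_mul]
    refine intervalIntegral.integral_mono_on hL (Continuous.intervalIntegrable (by fun_prop) _ _)
      (Continuous.intervalIntegrable (by fun_prop) _ _) fun x hx => ?_
    have := mul_le_mul_of_nonneg_left (hpt x hx.1 hx.2) (Real.exp_nonneg (-κ * x))
    linarith
  nlinarith

/-- Weighted bound for the inverse of `1 ± vol k`, from
`f ^ 2 ≤ 2 (f ± vol k f) ^ 2 + 2 (vol k f) ^ 2` and the contraction property of `vol k`. -/
theorem wnorm_resolvent {L κ C : ℝ} (hL : 0 ≤ L) (hκC : 4 * C ^ 2 * L ≤ κ)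
    {k : ℝ → ℝ → ℝ} (hk : Continuous fun p : ℝ × ℝ => k p.1 p.2)
    (hb : ∀ x ξ, 0 ≤ ξ → ξ ≤ x → x ≤ L → |k x ξ| ≤ C) {f g : ℝ → ℝ} (hf : Continuous f)
    (hg : Continuous g)
    (h : (∀ x, 0 ≤ x → x ≤ L → g x = f x + vol k f x) ∨
      (∀ x, 0 ≤ x → x ≤ L → g x = f x - vol k f x)) :
    wnorm L κ f ≤ 4 * wnorm L κ g := by
  have h1 := wnorm_vol hL hκC hk hb hf
  have h2 := wnorm_le_two hL κ hf hg (continuous_vol' hk hf) 2 2 (by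
    intro x h0 hx
    rcases h with h | h
    · rw [h x h0 hx]; nlinarith [sq_nonneg (f x + 2 * vol k f x)]
    · rw [h x h0 hx]; nlinarith [sq_nonneg (f x - 2 * vol k f x)])
  linarith

/-- Weighted energy estimate for the transport equation `φ_t + c φ_x = R`. The weight turns the
transport into damping at rate `c κ`; the source costs `wnorm φ + wnorm R`. -/
theorem energy {L : ℝ} (hL : 0 ≤ L) (κ c : ℝ) {φ φt φx : ℝ → ℝ → ℝ} (h : HasC1 φ φt φx) (t : ℝ) :
    ∃ D, HasDerivAt (fun τ => wnorm L κ (φ τ)) D t ∧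
      D ≤ c * φ t 0 ^ 2 - c * Real.exp (-κ * L) * φ t L ^ 2 - c * κ * wnorm L κ (φ t)
        + wnorm L κ (φ t) + wnorm L κ (fun x => φt t x + c * φx t x) := by
  have hφ := h.cont
  have hφt := h.contt
  have c1 := cont_right h.cont t
  have c2 := cont_right h.contt t
  have c3 := cont_right h.contx t
  refine ⟨_, hasDerivAt_integral_param (g := fun τ x => Real.exp (-κ * x) * φ τ x ^ 2)
    (g' := fun τ x => Real.exp (-κ * x) * (2 * φ τ x * φt τ x)) (by fun_prop) (by fun_prop)
    (fun τ x => ?_) 0 L t, ?_⟩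
  · have := ((h.ht τ x).pow 2).const_mul (Real.exp (-κ * x))
    refine this.congr_deriv ?_
    simp
  · have hd : ∀ x, HasDerivAt (fun x => c * (Real.exp (-κ * x) * φ t x ^ 2))
        (c * (Real.exp (-κ * x) * (2 * φ t x * φx t x))
          - c * κ * (Real.exp (-κ * x) * φ t x ^ 2)) x := by
      intro x
      have := ((((hasDerivAt_id x).const_mul (-κ)).exp).mul ((h.hx t x).pow 2)).const_mul c
      refine this.congr_deriv ?_
      simp only [id, Pi.pow_apply]; push_cast; ring
    have h1 := intervalIntegral.integral_eq_sub_of_hasDerivAt (a := 0) (b := L)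
      (fun x _ => hd x) (Continuous.intervalIntegrable (by fun_prop) _ _)
    rw [intervalIntegral.integral_sub (Continuous.intervalIntegrable (by fun_prop) _ _)
      (Continuous.intervalIntegrable (by fun_prop) _ _), intervalIntegral.integral_const_mul,
      intervalIntegral.integral_const_mul] at h1
    have h2 : (∫ x in (0:ℝ)..L, Real.exp (-κ * x) * (2 * φ t x * φt t x))
        + c * (∫ x in (0:ℝ)..L, Real.exp (-κ * x) * (2 * φ t x * φx t x))
        ≤ wnorm L κ (φ t) + wnorm L κ (fun x => φt t x + c * φx t x) := by
      unfold wnorm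
      rw [← intervalIntegral.integral_const_mul, ← intervalIntegral.integral_add
        (Continuous.intervalIntegrable (by fun_prop) _ _)
        (Continuous.intervalIntegrable (by fun_prop) _ _), ← intervalIntegral.integral_add
        (Continuous.intervalIntegrable (by fun_prop) _ _)
        (Continuous.intervalIntegrable (by fun_prop) _ _)]
      refine intervalIntegral.integral_mono_on hL
        (Continuous.intervalIntegrable (by fun_prop) _ _)
        (Continuous.intervalIntegrable (by fun_prop) _ _) fun x hx => ?_
      have := mul_nonneg (Real.exp_nonneg (-κ * x))
        (sq_nonneg (φ t x - (φt t x + c * φx t x)))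
      linarith
    simp only [mul_zero, Real.exp_zero, one_mul] at h1
    unfold wnorm at h2 ⊢
    linarith

/-! ### Backstepping: the equations in the target coordinates -/

theorem vol_zero (k : ℝ → ℝ → ℝ) (φ : ℝ → ℝ) : vol k φ 0 = 0 := by simp [vol]

theorem vol_sub_mul {k : ℝ → ℝ → ℝ} {φ ψ : ℝ → ℝ} (hk : Continuous fun p : ℝ × ℝ => k p.1 p.2)
    (hφ : Continuous φ) (hψ : Continuous ψ) (c x : ℝ) :
    vol k (fun ξ => φ ξ - c * ψ ξ) x = vol k φ x - c * vol k ψ x := by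
  have := cont_right hk x
  unfold vol
  rw [← intervalIntegral.integral_const_mul, ← intervalIntegral.integral_sub
    (Continuous.intervalIntegrable (by fun_prop) _ _)
    (Continuous.intervalIntegrable (by fun_prop) _ _)]
  exact intervalIntegral.integral_congr fun ξ _ => by ring

/-- The observer kernel equation for `m₄`, integrated against `b`, turns the equation for the output
error `w` into a Volterra equation for the source term `b_t - μ b_x`. -/
theorem observer_source {L μ : ℝ} {θ : Fin 3 → ℝ → ℝ} {m mx ms : Fin 3 → ℝ → ℝ → ℝ}
    {m₄ m₄x m₄s : ℝ → ℝ → ℝ} (hm : ∀ i, HasC1 (m i) (mx i) (ms i)) (hm₄ : HasC1 m₄ m₄x m₄s)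
    (hm₄pde : ∀ x ξ : ℝ, 0 ≤ ξ → ξ ≤ x → x ≤ L →
      μ * m₄x x ξ + μ * m₄s x ξ = - ∑ j, θ j x * m j x ξ)
    {b bt bx w wt wx : ℝ → ℝ} {u a : Fin 3 → ℝ → ℝ} (hb : ∀ x, HasDerivAt b (bx x) x)
    (hbt : Continuous bt) (hbx : Continuous bx)
    {x : ℝ} (hx : 0 ≤ x) (hxL : x ≤ L)
    (hw0 : w 0 = b 0)
    (hwt : wt x = bt x + vol m₄ bt x)
    (hwx : wx x = bx x + (m₄ x x * b x + vol m₄x b x))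
    (hu : ∀ i, u i x = a i x + vol (m i) b x)
    (hpde : wt x - μ * wx x = (∑ j, θ j x * u j x) - μ * m₄ x 0 * w 0) :
    (bt x - μ * bx x) + vol m₄ (fun ξ => bt ξ - μ * bx ξ) x = ∑ j, θ j x * a j x := by
  have hbc : Continuous b := continuous_iff_continuousAt.2 fun x => (hb x).continuousAt
  have c0 := cont_right (hm 0).cont x
  have c1 := cont_right (hm 1).cont x
  have c2 := cont_right (hm 2).cont x
  have c3 := cont_right hm₄.contt x
  have c4 := cont_right hm₄.contx x
  have hlin := integral_linear ![μ, μ, θ 0 x, θ 1 x, θ 2 x]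
    ![fun ξ => m₄x x ξ * b ξ, fun ξ => m₄s x ξ * b ξ, fun ξ => m 0 x ξ * b ξ,
      fun ξ => m 1 x ξ * b ξ, fun ξ => m 2 x ξ * b ξ]
    (by intro i; fin_cases i <;> (simp; fun_prop)) hx (by
      intro ξ h0 h1
      have := hm₄pde x ξ h0 h1 hxL
      simp [Fin.sum_univ_succ] at this ⊢
      linear_combination b ξ * this)
  rw [vol_sub_mul hm₄.cont hbt hbx, vol_ibp hm₄ hb hbx]
  simp only [Fin.sum_univ_three, hu, hwt, hwx, hw0] at hpde ⊢
  simp [Fin.sum_univ_succ] at hlin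
  unfold vol at hpde ⊢
  linear_combination hpde + hlin

/-- The observer kernel equation for `m i` turns the equation for the error `u i` into the target
equation for `a i`, which is coupled to `b` only through the source term. -/
theorem observer_target {L μ : ℝ} {γ : Fin 3 → ℝ} {σ : Fin 3 → Fin 3 → ℝ} {α : Fin 3 → ℝ → ℝ}
    {m mx ms : Fin 3 → ℝ → ℝ → ℝ} (hγ : ∀ i, 0 < γ i) (hμ : 0 < μ)
    {m₄ m₄x m₄s : ℝ → ℝ → ℝ} (hm : ∀ i, HasC1 (m i) (mx i) (ms i)) (hm₄ : HasC1 m₄ m₄x m₄s)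
    (hmpde : ∀ i, ∀ x ξ : ℝ, 0 ≤ ξ → ξ ≤ x → x ≤ L →
      γ i * mx i x ξ - μ * ms i x ξ = (∑ j, σ i j * m j x ξ) + α i x * m₄ x ξ)
    (hmdiag : ∀ i, ∀ x : ℝ, 0 ≤ x → x ≤ L → m i x x = α i x / (γ i + μ))
    {b bt bx w : ℝ → ℝ} {u ut ux a : Fin 3 → ℝ → ℝ} (hb : ∀ x, HasDerivAt b (bx x) x)
    (hbt : Continuous bt) (hbx : Continuous bx)
    {x : ℝ} (hx : 0 ≤ x) (hxL : x ≤ L)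
    (hw0 : w 0 = b 0) (hw : w x = b x + vol m₄ b x)
    (hu : ∀ i, u i x = a i x + vol (m i) b x) (i : Fin 3)
    (hpde : ut i x + γ i * ux i x = (∑ j, σ i j * u j x) + α i x * w x - μ * m i x 0 * w 0) :
    (ut i x - vol (m i) bt x) + γ i * (ux i x - (m i x x * b x + vol (mx i) b x))
      = (∑ j, σ i j * a j x) - vol (m i) (fun ξ => bt ξ - μ * bx ξ) x := by
  have hbc : Continuous b := continuous_iff_continuousAt.2 fun x => (hb x).continuousAt
  have c0 := cont_right (hm 0).cont x
  have c1 := cont_right (hm 1).cont x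
  have c2 := cont_right (hm 2).cont x
  have c3 := cont_right (hm i).contt x
  have c4 := cont_right (hm i).contx x
  have c5 := cont_right hm₄.cont x
  have hlin := integral_linear ![γ i, -μ, -σ i 0, -σ i 1, -σ i 2, - α i x]
    ![fun ξ => mx i x ξ * b ξ, fun ξ => ms i x ξ * b ξ, fun ξ => m 0 x ξ * b ξ,
      fun ξ => m 1 x ξ * b ξ, fun ξ => m 2 x ξ * b ξ, fun ξ => m₄ x ξ * b ξ]
    (by intro i; fin_cases i <;> (simp; fun_prop)) hx (by
      intro ξ h0 h1
      have := hmpde i x ξ h0 h1 hxL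
      simp [Fin.sum_univ_succ] at this ⊢
      linear_combination b ξ * this)
  have hdiag : (γ i + μ) * m i x x = α i x := by
    rw [hmdiag i x hx hxL]
    have := hγ i
    field_simp
  rw [vol_sub_mul (hm i).cont hbt hbx, vol_ibp (hm i) hb hbx]
  simp only [Fin.sum_univ_three, hu, hw, hw0] at hpde ⊢
  simp [Fin.sum_univ_succ] at hlin
  unfold vol at hpde ⊢
  linear_combination hpde - hlin - b x * hdiag

/-- The controller kernel equations turn the equation for `w` into a pure transport equation for
`w - ∑ vol (k i) (u i) - vol k₄ w`, forced only by the output error `e`. -/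
theorem controller_target {L μ e : ℝ} {γ δ : Fin 3 → ℝ} {σ : Fin 3 → Fin 3 → ℝ}
    {α θ : Fin 3 → ℝ → ℝ} {k kx ks : Fin 3 → ℝ → ℝ → ℝ} (hγ : ∀ i, 0 < γ i) (hμ : 0 < μ)
    {k₄ k₄x k₄s : ℝ → ℝ → ℝ} (hk : ∀ i, HasC1 (k i) (kx i) (ks i)) (hk₄ : HasC1 k₄ k₄x k₄s)
    (hkpde : ∀ i, ∀ x ξ : ℝ, 0 ≤ ξ → ξ ≤ x → x ≤ L →
      μ * kx i x ξ - γ i * ks i x ξ = (∑ j, σ j i * k j x ξ) + θ i ξ * k₄ x ξ)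
    (hk₄pde : ∀ x ξ : ℝ, 0 ≤ ξ → ξ ≤ x → x ≤ L →
      μ * k₄x x ξ + μ * k₄s x ξ = ∑ i, α i ξ * k i x ξ)
    (hkdiag : ∀ i, ∀ x : ℝ, 0 ≤ x → x ≤ L → k i x x = - θ i x / (γ i + μ))
    (hk₄bc : ∀ x : ℝ, 0 ≤ x → x ≤ L → μ * k₄ x 0 = ∑ j, γ j * δ j * k j x 0)
    {w wt wx p₄ : ℝ → ℝ} {u ut ux p : Fin 3 → ℝ → ℝ}
    (hu : ∀ i x, HasDerivAt (u i) (ux i x) x) (hut : ∀ i, Continuous (ut i))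
    (hux : ∀ i, Continuous (ux i))
    (hw : ∀ x, HasDerivAt w (wx x) x) (hwt : Continuous wt) (hwx : Continuous wx)
    (hp : ∀ i, Continuous (p i)) (hp₄ : Continuous p₄)
    (hupde : ∀ i x, 0 ≤ x → x ≤ L →
      ut i x + γ i * ux i x = (∑ j, σ i j * u j x) + α i x * w x + p i x * e)
    (hwpde : ∀ x, 0 ≤ x → x ≤ L → wt x - μ * wx x = (∑ j, θ j x * u j x) + p₄ x * e)
    (hbc : ∀ i, u i 0 = δ i * (w 0 + e)) {x : ℝ} (hx : 0 ≤ x) (hxL : x ≤ L) :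
    (wt x - (∑ i, vol (k i) (ut i) x) - vol k₄ wt x)
      + (-μ) * (wx x - (∑ i, (k i x x * u i x + vol (kx i) (u i) x))
          - (k₄ x x * w x + vol k₄x w x))
      = (p₄ x - (∑ i, vol (k i) (p i) x) - vol k₄ p₄ x - ∑ i, γ i * δ i * k i x 0) * e := by
  have huc : ∀ i, Continuous (u i) := fun i =>
    continuous_iff_continuousAt.2 fun x => (hu i x).continuousAt
  have hwc : Continuous w := continuous_iff_continuousAt.2 fun x => (hw x).continuousAt
  have c0 := fun i => cont_right (hk i).cont x
  have c1 := fun i => cont_right (hk i).contt x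
  have c2 := fun i => cont_right (hk i).contx x
  have c3 := cont_right hk₄.cont x
  have c4 := cont_right hk₄.contt x
  have c5 := cont_right hk₄.contx x
  have hs : ∀ f : Fin 3 → ℝ → ℝ, (∀ i, Continuous (f i)) →
      ∫ ξ in (0:ℝ)..x, ∑ i, f i ξ = ∑ i, ∫ ξ in (0:ℝ)..x, f i ξ := fun f hf =>
    intervalIntegral.integral_finsetSum fun i _ => (hf i).intervalIntegrable _ _
  have hlin0 := integral_linear ![1, 1, -μ, -μ, 1, 1, -μ, -μ, -e, -e]
    ![fun ξ => ∑ i, k i x ξ * ut i ξ, fun ξ => k₄ x ξ * wt ξ, fun ξ => ∑ i, kx i x ξ * u i ξ,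
      fun ξ => k₄x x ξ * w ξ, fun ξ => ∑ i, γ i * (ks i x ξ * u i ξ),
      fun ξ => ∑ i, γ i * (k i x ξ * ux i ξ), fun ξ => k₄s x ξ * w ξ, fun ξ => k₄ x ξ * wx ξ,
      fun ξ => ∑ i, k i x ξ * p i ξ, fun ξ => k₄ x ξ * p₄ ξ]
    (by intro i; fin_cases i <;> (simp only [Fin.reduceFinMk, Matrix.cons_val]; fun_prop)) hx (by
      intro ξ h0 h1
      have e0 := fun i => hkpde i x ξ h0 h1 hxL
      have e1 := hk₄pde x ξ h0 h1 hxL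
      have e2 := fun i => hupde i ξ h0 (h1.trans hxL)
      have e3 := hwpde ξ h0 (h1.trans hxL)
      simp only [Fin.sum_univ_three] at e0 e1 e2 e3
      simp [Fin.sum_univ_succ]
      linear_combination k 0 x ξ * e2 0 + k 1 x ξ * e2 1 + k 2 x ξ * e2 2 + k₄ x ξ * e3
        - u 0 ξ * e0 0 - u 1 ξ * e0 1 - u 2 ξ * e0 2 - w ξ * e1)
  have hdiag : ∀ i, (γ i + μ) * k i x x = - θ i x := by
    intro i
    rw [hkdiag i x hx hxL]
    have := hγ i
    field_simp
  have i0 := fun i => vol_ibp (hk i) (hu i) (hux i) x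
  have i1 := vol_ibp hk₄ hw hwx x
  have hbc4 := hk₄bc x hx hxL
  have hw' := hwpde x hx hxL
  have hlin : (∫ ξ in (0:ℝ)..x, ∑ i, k i x ξ * ut i ξ) + ((∫ ξ in (0:ℝ)..x, k₄ x ξ * wt ξ)
      + (-(μ * ∫ ξ in (0:ℝ)..x, ∑ i, kx i x ξ * u i ξ)
      + (-(μ * ∫ ξ in (0:ℝ)..x, k₄x x ξ * w ξ)
      + ((∫ ξ in (0:ℝ)..x, ∑ i, γ i * (ks i x ξ * u i ξ))
      + ((∫ ξ in (0:ℝ)..x, ∑ i, γ i * (k i x ξ * ux i ξ))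
      + (-(μ * ∫ ξ in (0:ℝ)..x, k₄s x ξ * w ξ) + (-(μ * ∫ ξ in (0:ℝ)..x, k₄ x ξ * wx ξ)
      + (-(e * ∫ ξ in (0:ℝ)..x, ∑ i, k i x ξ * p i ξ)
      + -(e * ∫ ξ in (0:ℝ)..x, k₄ x ξ * p₄ ξ))))))))) = 0 := by
    simpa [Fin.sum_univ_succ] using hlin0
  rw [hs, hs, hs, hs, hs] at hlin
  · unfold vol at i0 i1 ⊢
    simp only [Fin.sum_univ_three, intervalIntegral.integral_const_mul] at hlin hw' hbc4 ⊢
    linear_combination hw' - hlin + u 0 x * hdiag 0 + u 1 x * hdiag 1 + u 2 x * hdiag 2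
      + γ 0 * i0 0 + γ 1 * i0 1 + γ 2 * i0 2 - μ * i1 + w 0 * hbc4
      - γ 0 * k 0 x 0 * hbc 0 - γ 1 * k 1 x 0 * hbc 1 - γ 2 * k 2 x 0 * hbc 2
  all_goals intro i; fun_prop

/-! ### Energy and source estimates for the stages -/

theorem sq_sum3_le {c : Fin 3 → ℝ} {D : ℝ} (hc : ∀ i, |c i| ≤ D) (v : Fin 3 → ℝ) :
    (∑ i, c i * v i) ^ 2 ≤ 3 * D ^ 2 * ∑ i, v i ^ 2 := by
  have h : ∀ i, (c i * v i) ^ 2 ≤ D ^ 2 * v i ^ 2 := fun i => by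
    rw [mul_pow]
    exact mul_le_mul_of_nonneg_right (sq_le_sq' (abs_le.1 (hc i)).1 (abs_le.1 (hc i)).2)
      (sq_nonneg _)
  have h0 := h 0
  have h1 := h 1
  have h2 := h 2
  simp only [Fin.sum_univ_three]
  nlinarith [sq_nonneg (c 0 * v 0 - c 1 * v 1), sq_nonneg (c 0 * v 0 - c 2 * v 2),
    sq_nonneg (c 1 * v 1 - c 2 * v 2)]

theorem sq_mul_le {c D : ℝ} (hc : |c| ≤ D) (v : ℝ) : (c * v) ^ 2 ≤ D ^ 2 * v ^ 2 := by
  rw [mul_pow]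
  exact mul_le_mul_of_nonneg_right (sq_le_sq' (abs_le.1 hc).1 (abs_le.1 hc).2) (sq_nonneg _)

/-- Energy estimate for a family of three rightward transport equations whose sources are bounded
by `Q / 3` times the total energy plus an external term `r`. -/
theorem energy_family {L κ Q r : ℝ} (hL : 0 ≤ L) {γ : Fin 3 → ℝ}
    (hκ : ∀ i, 3 + Q ≤ κ * γ i)
    {a at' ax : Fin 3 → ℝ → ℝ → ℝ} (ha : ∀ i, HasC1 (a i) (at' i) (ax i)) (t : ℝ)
    (hR : ∀ i, wnorm L κ (fun x => at' i t x + γ i * ax i t x)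
      ≤ Q / 3 * (∑ j, wnorm L κ (a j t)) + r) :
    ∃ D', HasDerivAt (fun τ => ∑ i, wnorm L κ (a i τ)) D' t ∧
      D' ≤ (∑ i, γ i * a i t 0 ^ 2) - Real.exp (-κ * L) * (∑ i, γ i * a i t L ^ 2)
        - 2 * (∑ i, wnorm L κ (a i t)) + 3 * r := by
  choose D' hD hle using fun i => energy hL κ (γ i) (ha i) t
  refine ⟨∑ i, D' i, HasDerivAt.fun_sum fun i _ => hD i, ?_⟩
  have h : ∀ i, D' i ≤ γ i * a i t 0 ^ 2 - Real.exp (-κ * L) * (γ i * a i t L ^ 2)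
      - (2 + Q) * wnorm L κ (a i t) + (Q / 3 * (∑ j, wnorm L κ (a j t)) + r) := by
    intro i
    have h1 := hle i
    have h2 := hR i
    have h3 := mul_le_mul_of_nonneg_right (hκ i) (wnorm_nonneg hL κ (a i t))
    linarith
  have h0 := h 0
  have h1 := h 1
  have h2 := h 2
  simp only [Fin.sum_univ_three] at h0 h1 h2 ⊢
  linarith

/-- Energy estimate for a leftward transport equation, with the increasing weight `exp (κ x)`. -/
theorem energy_left {L κ μ : ℝ} (hL : 0 ≤ L) (hκ : 3 ≤ κ * μ)
    {b bt bx : ℝ → ℝ → ℝ} (hb : HasC1 b bt bx) (t : ℝ) :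
    ∃ D', HasDerivAt (fun τ => wnorm L (-κ) (b τ)) D' t ∧
      D' ≤ -μ * b t 0 ^ 2 + μ * Real.exp (κ * L) * b t L ^ 2 - 2 * wnorm L (-κ) (b t)
        + Real.exp (|-κ - κ| * L) * wnorm L κ (fun x => bt t x + (-μ) * bx t x) := by
  obtain ⟨D', hD, hle⟩ := energy hL (-κ) (-μ) hb t
  refine ⟨D', hD, ?_⟩
  have c1 := cont_right hb.contt t
  have c2 := cont_right hb.contx t
  have h1 : wnorm L (-κ) (fun x => bt t x + (-μ) * bx t x) ≤ _ :=
    wnorm_weight (κ' := κ) hL (by fun_prop)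
  have h3 := mul_le_mul_of_nonneg_right hκ (wnorm_nonneg hL (-κ) (b t))
  rw [neg_neg] at hle
  linarith

/-- The source term `f = b_t - μ b_x` of the `b` equation is controlled by the energy of `a`. -/
theorem target_source_le {L κ D : ℝ} (hL : 0 ≤ L) (hκD : 4 * D ^ 2 * L ≤ κ)
    {θ : Fin 3 → ℝ → ℝ} (hθ : ∀ i x, 0 ≤ x → x ≤ L → |θ i x| ≤ D)
    {m₄ : ℝ → ℝ → ℝ} (hm₄ : Continuous fun p : ℝ × ℝ => m₄ p.1 p.2)
    (hb₄ : ∀ x ξ, 0 ≤ ξ → ξ ≤ x → x ≤ L → |m₄ x ξ| ≤ D)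
    {a : Fin 3 → ℝ → ℝ} {f : ℝ → ℝ} (ha : ∀ i, Continuous (a i)) (hf : Continuous f)
    (h : ∀ x, 0 ≤ x → x ≤ L → f x + vol m₄ f x = ∑ j, θ j x * a j x) :
    wnorm L κ f ≤ 12 * D ^ 2 * ∑ i, wnorm L κ (a i) := by
  have hg : Continuous fun x => f x + vol m₄ f x := hf.add (continuous_vol' hm₄ hf)
  have h1 := wnorm_resolvent hL hκD hm₄ hb₄ hf hg (Or.inl fun x _ _ => rfl)
  have h2 := wnorm_le_three hL κ hg ha hg hg (3 * D ^ 2) 0 0 (by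
    intro x h0 h1
    have := sq_sum3_le (fun i => hθ i x h0 h1) (fun i => a i x)
    rw [h x h0 h1]; linarith)
  linarith

/-- The source term of the `a` equation is controlled by the energy of `a` alone. -/
theorem target_rhs_le {L κ D : ℝ} (hL : 0 ≤ L) (hκD : 4 * D ^ 2 * L ≤ κ)
    {s : Fin 3 → ℝ} (hs : ∀ i, |s i| ≤ D)
    {m : ℝ → ℝ → ℝ} (hm : Continuous fun p : ℝ × ℝ => m p.1 p.2)
    (hb : ∀ x ξ, 0 ≤ ξ → ξ ≤ x → x ≤ L → |m x ξ| ≤ D)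
    {a : Fin 3 → ℝ → ℝ} {f R : ℝ → ℝ} (ha : ∀ i, Continuous (a i)) (hf : Continuous f)
    (hR : Continuous R)
    (h : ∀ x, 0 ≤ x → x ≤ L → R x = (∑ j, s j * a j x) - vol m f x)
    (hfa : wnorm L κ f ≤ 12 * D ^ 2 * ∑ i, wnorm L κ (a i)) :
    wnorm L κ R ≤ 48 * D ^ 2 / 3 * (∑ i, wnorm L κ (a i)) + 0 := by
  have h1 := wnorm_vol hL hκD hm hb hf
  have h2 := wnorm_le_three hL κ hR ha (continuous_vol' hm hf) hR (4 * D ^ 2) 4 0 (by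
    intro x h0 h1
    have := sq_sum3_le hs (fun i => a i x)
    rw [h x h0 h1]
    nlinarith [sq_nonneg ((∑ j, s j * a j x) + 3 * vol m f x)])
  linarith

/-- The component `w` of the observer state is recovered from `u` and `z`. -/
theorem observer_w_le {L κ D : ℝ} (hL : 0 ≤ L) (hκD : 4 * D ^ 2 * L ≤ κ)
    {k : Fin 3 → ℝ → ℝ → ℝ} {k₄ : ℝ → ℝ → ℝ}
    (hk : ∀ i, Continuous fun p : ℝ × ℝ => k i p.1 p.2)
    (hk₄ : Continuous fun p : ℝ × ℝ => k₄ p.1 p.2)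
    (hb : ∀ i x ξ, 0 ≤ ξ → ξ ≤ x → x ≤ L → |k i x ξ| ≤ D)
    (hb₄ : ∀ x ξ, 0 ≤ ξ → ξ ≤ x → x ≤ L → |k₄ x ξ| ≤ D)
    {u : Fin 3 → ℝ → ℝ} {w z : ℝ → ℝ} (hu : ∀ i, Continuous (u i)) (hw : Continuous w)
    (hz : Continuous z)
    (h : ∀ x, z x = w x - (∑ i, vol (k i) (u i) x) - vol k₄ w x) :
    wnorm L κ w ≤ 4 * (∑ i, wnorm L κ (u i)) + 16 * wnorm L κ z := by
  have hV := fun i => continuous_vol' (hk i) (hu i)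
  have hg : Continuous fun x => z x + ∑ i, vol (k i) (u i) x := by fun_prop
  have h1 := wnorm_resolvent hL hκD hk₄ hb₄ hw hg (Or.inr fun x _ _ => by
    rw [h x]; ring)
  have h2 := wnorm_le_three hL κ hg hV hz hz 4 4 0 (by
    intro x _ _
    have := sq_sum3_le (c := fun _ => 1) (D := 1) (by simp) (fun i => vol (k i) (u i) x)
    simp only [one_mul] at this
    nlinarith [sq_nonneg ((∑ i, vol (k i) (u i) x) - 3 * z x)])
  have h3 := fun i => wnorm_vol hL hκD (hk i) (hb i) (hu i)
  have h30 := h3 0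
  have h31 := h3 1
  have h32 := h3 2
  simp only [Fin.sum_univ_three] at h1 h2 ⊢
  linarith

theorem observer_rhs_le {L κ D e : ℝ} (hL : 0 ≤ L) (hκ : 0 < κ)
    {s : Fin 3 → ℝ} (hs : ∀ i, |s i| ≤ D) {α p : ℝ → ℝ}
    (hα : ∀ x, 0 ≤ x → x ≤ L → |α x| ≤ D) (hp : ∀ x, 0 ≤ x → x ≤ L → |p x| ≤ D)
    {u : Fin 3 → ℝ → ℝ} {w R : ℝ → ℝ} (hu : ∀ i, Continuous (u i)) (hw : Continuous w)
    (hR : Continuous R)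
    (h : ∀ x, 0 ≤ x → x ≤ L → R x = (∑ j, s j * u j x) + α x * w x + p x * e) :
    wnorm L κ R ≤ 5 * D ^ 2 * (∑ i, wnorm L κ (u i)) + 5 * D ^ 2 * wnorm L κ w
      + 5 * D ^ 2 * (L * e ^ 2) := by
  have h2 := wnorm_le_three hL κ hR hu hw (continuous_const (y := e))
    (5 * D ^ 2) (5 * D ^ 2) (5 * D ^ 2) (by
      intro x h0 h1
      have e1 := sq_sum3_le hs (fun i => u i x)
      have e2 := sq_mul_le (hα x h0 h1) (w x)
      have e3 := sq_mul_le (hp x h0 h1) e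
      rw [h x h0 h1]
      generalize (∑ j, s j * u j x) = X at *
      generalize α x * w x = Y at *
      generalize p x * e = Z at *
      nlinarith [sq_nonneg (X - 3 * Y), sq_nonneg (X - 3 * Z), sq_nonneg (Y - Z)])
  have h3 := wnorm_const hL hκ.le e
  have h4 := mul_le_mul_of_nonneg_left h3 (by positivity : 0 ≤ 5 * D ^ 2)
  linarith

/-! ### Combining a cascade of dissipation inequalities -/

/-- Weights for the composite Lyapunov function of the cascade `A → B → Z → H`; `aL`, `b0`, `z0`
are the boundary terms passed from one stage to the next. -/
theorem exists_weights {μ c₁ c₂ c₃ c₄ c₅ c₆ c₇ : ℝ} (hμ : 0 < μ) (h₁ : 0 < c₁) (h₂ : 0 ≤ c₂)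
    (h₃ : 0 ≤ c₃) (h₄ : 0 ≤ c₄) (h₅ : 0 ≤ c₅) (h₆ : 0 ≤ c₆) (h₇ : 0 ≤ c₇) :
    ∃ p q r : ℝ, 1 ≤ p ∧ 1 ≤ q ∧ 1 ≤ r ∧ ∀ A B Z H aL b0 z0 A' B' Z' H' : ℝ,
      0 ≤ A → 0 ≤ B → 0 ≤ Z → 0 ≤ H → 0 ≤ aL → 0 ≤ b0 → 0 ≤ z0 →
      A' ≤ -c₁ * aL - 2 * A → B' ≤ -μ * b0 + c₂ * aL - 2 * B + c₃ * A →
      Z' ≤ -μ * z0 - 2 * Z + c₄ * b0 → H' ≤ c₅ * z0 + c₆ * b0 - 2 * H + c₇ * Z →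
      p * A' + q * B' + r * Z' + H' ≤ -(p * A + q * B + r * Z + H) := by
  let r := c₇ + c₅ / μ + 1
  let q := (r * c₄ + c₆) / μ + 1
  let p := q * c₃ + q * c₂ / c₁ + 1
  have hr : 1 ≤ r := by
    have : 0 ≤ c₅ / μ := by positivity
    simp only [r]; linarith
  have hr0 : 0 ≤ r := by linarith
  have hq : 1 ≤ q := by
    have : 0 ≤ (r * c₄ + c₆) / μ := by positivity
    simp only [q]; linarith
  have hq0 : 0 ≤ q := by linarith
  have hp : 1 ≤ p := by
    have : 0 ≤ q * c₃ := by positivity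
    have : 0 ≤ q * c₂ / c₁ := by positivity
    simp only [p]; linarith
  have e1 : r * μ - c₅ = (c₇ + 1) * μ := by simp only [r]; field_simp; ring
  have e2 : q * μ - (r * c₄ + c₆) = μ := by simp only [q]; field_simp; ring
  have e3 : p * c₁ - q * c₂ = (q * c₃ + 1) * c₁ := by simp only [p]; field_simp; ring
  have e4 : 0 ≤ r - c₇ := by
    have : 0 ≤ c₅ / μ := by positivity
    simp only [r]; linarith
  have e5 : 0 ≤ p - q * c₃ := by
    have : 0 ≤ q * c₂ / c₁ := by positivity
    simp only [p]; linarith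
  refine ⟨p, q, r, hp, hq, hr, ?_⟩
  intro A B Z H aL b0 z0 A' B' Z' H' hA hB hZ hH haL hb0 hz0 iA iB iZ iH
  clear_value p q r
  have jA := mul_le_mul_of_nonneg_left iA (by linarith : 0 ≤ p)
  have jB := mul_le_mul_of_nonneg_left iB hq0
  have jZ := mul_le_mul_of_nonneg_left iZ hr0
  have k1 : 0 ≤ (r * μ - c₅) * z0 := by rw [e1]; positivity
  have k2 : 0 ≤ (q * μ - (r * c₄ + c₆)) * b0 := by rw [e2]; positivity
  have k3 : 0 ≤ (p * c₁ - q * c₂) * aL := by rw [e3]; positivity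
  have k4 := mul_nonneg e4 hZ
  have k5 := mul_nonneg e5 hA
  have k6 := mul_nonneg hq0 hB
  linarith

/-- Gronwall's inequality for `V' ≤ -V`. -/
theorem exp_decay {V : ℝ → ℝ} (h : ∀ t, 0 ≤ t → ∃ D, HasDerivAt V D t ∧ D ≤ - V t) {t : ℝ}
    (ht : 0 ≤ t) : V t ≤ Real.exp (-t) * V 0 := by
  choose! D hD hle using h
  have hd : ∀ s, 0 ≤ s → HasDerivAt (fun s => Real.exp s * V s)
      (Real.exp s * V s + Real.exp s * D s) s := fun s hs => (Real.hasDerivAt_exp s).mul (hD s hs)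
  have hanti : AntitoneOn (fun s => Real.exp s * V s) (Ici 0) := by
    refine antitoneOn_of_deriv_nonpos (convex_Ici 0)
      (fun s hs => (hd s hs).continuousAt.continuousWithinAt)
      (fun s hs => ?_) (fun s hs => ?_)
    · rw [interior_Ici] at hs
      exact (hd s (le_of_lt hs)).differentiableAt.differentiableWithinAt
    · rw [interior_Ici] at hs
      rw [(hd s (le_of_lt hs)).deriv]
      have := mul_le_mul_of_nonneg_left (hle s (le_of_lt hs)) (Real.exp_nonneg s)
      linarith
  have h1 := hanti (mem_Ici.2 le_rfl) (mem_Ici.2 ht) ht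
  simp only [Real.exp_zero, one_mul] at h1
  have h2 := mul_le_mul_of_nonneg_left h1 (Real.exp_nonneg (-t))
  rwa [← mul_assoc, ← Real.exp_add, neg_add_cancel, Real.exp_zero, one_mul] at h2

/-! ### The two halves of the cascade -/

theorem eventually_abs_le {L : ℝ} {f : ℝ → ℝ} (hf : ContinuousOn f (Icc 0 L)) :
    ∀ᶠ D in atTop, ∀ x, 0 ≤ x → x ≤ L → |f x| ≤ D := by
  obtain ⟨C, hC⟩ := isCompact_Icc.exists_bound_of_continuousOn hf
  filter_upwards [eventually_ge_atTop C] with D hD x h0 h1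
  exact (hC x ⟨h0, h1⟩).trans hD

theorem eventually_abs_kernel_le {L : ℝ} {k : ℝ → ℝ → ℝ}
    (hk : Continuous fun p : ℝ × ℝ => k p.1 p.2) :
    ∀ᶠ D in atTop, ∀ x ξ, 0 ≤ ξ → ξ ≤ x → x ≤ L → |k x ξ| ≤ D := by
  obtain ⟨C, hC⟩ := (isCompact_Icc (a := (0:ℝ)) (b := L)).prod
    (isCompact_Icc (a := (0:ℝ)) (b := L)) |>.exists_bound_of_continuousOn hk.continuousOn
  filter_upwards [eventually_ge_atTop C] with D hD x ξ h0 h1 h2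
  exact (hC (x, ξ) ⟨⟨h0.trans h1, h2⟩, ⟨h0, h1.trans h2⟩⟩).trans hD

theorem eventually_le_mul {c g : ℝ} (hg : 0 < g) : ∀ᶠ D in atTop, c ≤ D * g := by
  filter_upwards [eventually_ge_atTop (c / g)] with D hD
  exact (div_le_iff₀ hg).1 hD

/-- The observer error, in the backstepping coordinates `a`, `b` defined by
`w = b + vol m₄ b` and `u i = a i + vol (m i) b`, is a cascade `a → b` of transport equations;
the energies of the two stages satisfy differential inequalities. -/
theorem error_cascade {L μ κ D ρ₁ ρ₂ : ℝ} (hL : 0 ≤ L) {γ : Fin 3 → ℝ} (hγ : ∀ i, 0 < γ i)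
    (hμ : 0 < μ) {σ : Fin 3 → Fin 3 → ℝ} {α θ : Fin 3 → ℝ → ℝ}
    {m mx ms : Fin 3 → ℝ → ℝ → ℝ} {m₄ m₄x m₄s : ℝ → ℝ → ℝ}
    (hm : ∀ i, HasC1 (m i) (mx i) (ms i)) (hm₄ : HasC1 m₄ m₄x m₄s)
    (hmpde : ∀ i, ∀ x ξ : ℝ, 0 ≤ ξ → ξ ≤ x → x ≤ L →
      γ i * mx i x ξ - μ * ms i x ξ = (∑ j, σ i j * m j x ξ) + α i x * m₄ x ξ)
    (hm₄pde : ∀ x ξ : ℝ, 0 ≤ ξ → ξ ≤ x → x ≤ L →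
      μ * m₄x x ξ + μ * m₄s x ξ = - ∑ j, θ j x * m j x ξ)
    (hmdiag : ∀ i, ∀ x : ℝ, 0 ≤ x → x ≤ L → m i x x = α i x / (γ i + μ))
    (hm₄bc : ∀ ξ : ℝ, 0 ≤ ξ → ξ ≤ L → m₄ L ξ = ρ₁ * m 0 L ξ + ρ₂ * m 1 L ξ)
    (hD : 1 ≤ D) (hσD : ∀ i j, |σ i j| ≤ D) (hρ₁ : |ρ₁| ≤ D) (hρ₂ : |ρ₂| ≤ D)
    (hγD : ∀ i, 1 ≤ D * γ i)
    (hθD : ∀ i x, 0 ≤ x → x ≤ L → |θ i x| ≤ D)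
    (hmD : ∀ i x ξ, 0 ≤ ξ → ξ ≤ x → x ≤ L → |m i x ξ| ≤ D)
    (hm₄D : ∀ x ξ, 0 ≤ ξ → ξ ≤ x → x ≤ L → |m₄ x ξ| ≤ D)
    (hκD : 4 * D ^ 2 * L ≤ κ) (hκμ : 3 ≤ κ * μ)
    (hκγ : ∀ i, 3 + 48 * D ^ 2 ≤ κ * γ i)
    {u ut ux : Fin 3 → ℝ → ℝ → ℝ} {w wt wx : ℝ → ℝ → ℝ}
    (hu : ∀ i, HasC1 (u i) (ut i) (ux i)) (hw : HasC1 w wt wx)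
    (hupde : ∀ i t x, 0 ≤ t → 0 ≤ x → x ≤ L → ut i t x + γ i * ux i t x
      = (∑ j, σ i j * u j t x) + α i x * w t x - μ * m i x 0 * w t 0)
    (hwpde : ∀ t x, 0 ≤ t → 0 ≤ x → x ≤ L → wt t x - μ * wx t x
      = (∑ j, θ j x * u j t x) - μ * m₄ x 0 * w t 0)
    (hu0 : ∀ i t, 0 ≤ t → u i t 0 = 0)
    (hwL : ∀ t, 0 ≤ t → w t L = ρ₁ * u 0 t L + ρ₂ * u 1 t L) :
    ∃ (a : Fin 3 → ℝ → ℝ → ℝ) (b : ℝ → ℝ → ℝ),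
      (∀ i t, Continuous (a i t)) ∧ (∀ t, Continuous (b t)) ∧
      (∀ t x, 0 ≤ x → x ≤ L → w t x = b t x + vol m₄ (b t) x) ∧
      (∀ i t x, u i t x = a i t x + vol (m i) (b t) x) ∧
      ∀ t, 0 ≤ t → ∃ A' B' : ℝ,
        HasDerivAt (fun τ => ∑ i, wnorm L κ (a i τ)) A' t ∧
        HasDerivAt (fun τ => wnorm L (-κ) (b τ)) B' t ∧
        A' ≤ -Real.exp (-κ * L) * (∑ i, γ i * a i t L ^ 2) - 2 * (∑ i, wnorm L κ (a i t)) ∧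
        B' ≤ -μ * b t 0 ^ 2 + μ * Real.exp (κ * L) * (2 * D ^ 3) * (∑ i, γ i * a i t L ^ 2)
          - 2 * wnorm L (-κ) (b t)
          + Real.exp (|-κ - κ| * L) * (12 * D ^ 2) * (∑ i, wnorm L κ (a i t)) := by
  obtain ⟨b, bt, bx, hb, hbw⟩ := exists_vol_inverse hL hm₄ hw
  have hV := fun i => hasC1_vol (hm i) hb.cont hb.contt hb.ht
  have ha := fun i => (hu i).sub (hV i)
  have hac : ∀ i t, Continuous fun x => u i t x - vol (m i) (b t) x :=
    fun i t => cont_right (φ := fun t x => u i t x - vol (m i) (b t) x) (ha i).cont t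
  refine ⟨fun i t x => u i t x - vol (m i) (b t) x, b, hac,
    fun t => cont_right hb.cont t, fun t x h0 h1 => (hbw t x h0 h1).1,
    fun i t x => by ring, ?_⟩
  intro t ht
  have hw0 : w t 0 = b t 0 := by
    rw [(hbw t 0 le_rfl hL).1, vol_zero, add_zero]
  have ca := fun i => hac i t
  have cb := cont_right hb.cont t
  have cbt := cont_right hb.contt t
  have cbx := cont_right hb.contx t
  have hsrc : ∀ x, 0 ≤ x → x ≤ L →
      (bt t x - μ * bx t x) + vol m₄ (fun ξ => bt t ξ - μ * bx t ξ) x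
        = ∑ j, θ j x * (u j t x - vol (m j) (b t) x) := fun x h0 h1 =>
    observer_source (w := w t) (wt := wt t) (wx := wx t) (u := fun j => u j t)
      (a := fun j x => u j t x - vol (m j) (b t) x) hm hm₄ hm₄pde
      (hb.hx t) cbt cbx h0 h1 hw0 (hbw t x h0 h1).2.1 (hbw t x h0 h1).2.2
      (fun i => by ring) (hwpde t x ht h0 h1)
  have hF := target_source_le (a := fun j x => u j t x - vol (m j) (b t) x) hL hκD hθD hm₄.cont
    hm₄D ca (by fun_prop) hsrc
  have hR := fun i => target_rhs_le (a := fun j x => u j t x - vol (m j) (b t) x)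
    (R := fun x => (ut i t x - vol (m i) (bt t) x)
      + γ i * (ux i t x - (m i x x * b t x + vol (mx i) (b t) x)))
    hL hκD (hσD i) (hm i).cont (hmD i) ca (by fun_prop) (by
      have := cont_right (φ := fun t x => ut i t x - vol (m i) (bt t) x) (ha i).contt t
      have := cont_right (φ := fun t x => ux i t x - (m i x x * b t x + vol (mx i) (b t) x))
        (ha i).contx t
      fun_prop) (fun x h0 h1 =>
    observer_target (w := w t) (u := fun j => u j t) (ut := fun j => ut j t)
      (ux := fun j => ux j t) (a := fun j x => u j t x - vol (m j) (b t) x)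
      hγ hμ hm hm₄ hmpde hmdiag (hb.hx t) cbt cbx h0 h1 hw0
      (hbw t x h0 h1).1 (fun i => by ring) i (hupde i t x ht h0 h1)) hF
  obtain ⟨A', hA', hAle⟩ := energy_family hL hκγ ha t hR
  obtain ⟨B', hB', hBle⟩ := energy_left hL hκμ hb t
  refine ⟨A', B', hA', hB', ?_, ?_⟩
  · have h0 : ∀ i, u i t 0 - vol (m i) (b t) 0 = 0 := fun i => by
      rw [hu0 i t ht, vol_zero, sub_zero]
    simp only [h0] at hAle
    simp at hAle ⊢
    linarith
  · have hbL : b t L = ρ₁ * (u 0 t L - vol (m 0) (b t) L) + ρ₂ * (u 1 t L - vol (m 1) (b t) L) := by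
      have c0 := cont_right (hm 0).cont L
      have c1 := cont_right (hm 1).cont L
      have c2 := cont_right hm₄.cont L
      have hlin := integral_linear ![1, -ρ₁, -ρ₂]
        ![fun ξ => m₄ L ξ * b t ξ, fun ξ => m 0 L ξ * b t ξ, fun ξ => m 1 L ξ * b t ξ]
        (by intro i; fin_cases i <;> (simp; fun_prop)) hL (by
          intro ξ h0 h1
          have := hm₄bc ξ h0 h1
          simp [Fin.sum_univ_succ] at this ⊢
          linear_combination b t ξ * this)
      simp [Fin.sum_univ_succ] at hlin
      have h1 := (hbw t L hL le_rfl).1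
      have h2 := hwL t ht
      unfold vol at h1 ⊢
      linear_combination h2 - h1 - hlin
    have hF' : wnorm L κ (fun x => bt t x + (-μ) * bx t x)
        ≤ 12 * D ^ 2 * ∑ i, wnorm L κ (fun x => u i t x - vol (m i) (b t) x) := by
      have e : (fun x => bt t x + (-μ) * bx t x) = fun ξ => bt t ξ - μ * bx t ξ := by
        funext x; ring
      rw [e]; exact hF
    have hF'' := mul_le_mul_of_nonneg_left hF' (Real.exp_nonneg (|-κ - κ| * L))
    have hsq : b t L ^ 2 ≤ 2 * D ^ 3 * ∑ i, γ i * (u i t L - vol (m i) (b t) L) ^ 2 := by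
      have q0 := sq_mul_le hρ₁ (u 0 t L - vol (m 0) (b t) L)
      have q1 := sq_mul_le hρ₂ (u 1 t L - vol (m 1) (b t) L)
      have q : ∀ i, D ^ 2 * (u i t L - vol (m i) (b t) L) ^ 2
          ≤ D ^ 3 * (γ i * (u i t L - vol (m i) (b t) L) ^ 2) := by
        intro i
        have := mul_le_mul_of_nonneg_left (hγD i)
          (by positivity : 0 ≤ D ^ 2 * (u i t L - vol (m i) (b t) L) ^ 2)
        linarith
      have q2 := q 0
      have q3 := q 1
      have q4 : 0 ≤ D ^ 3 * (γ 2 * (u 2 t L - vol (m 2) (b t) L) ^ 2) := by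
        have := (hγ 2).le
        positivity
      rw [hbL]
      simp only [Fin.sum_univ_three]
      generalize u 0 t L - vol (m 0) (b t) L = X at *
      generalize u 1 t L - vol (m 1) (b t) L = Y at *
      nlinarith [sq_nonneg (ρ₁ * X - ρ₂ * Y)]
    have hsq' := mul_le_mul_of_nonneg_left hsq
      (by positivity : 0 ≤ μ * Real.exp (κ * L))
    linarith

/-- The observer state, in the backstepping coordinate `z`, is a cascade `z → hu` of transport
equations driven by the output error `e`; the energies of the two stages satisfy differential
inequalities. -/
theorem observer_cascade {L μ κ D : ℝ} (hL : 0 ≤ L) {γ δ : Fin 3 → ℝ}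
    (hγ : ∀ i, 0 < γ i)
    (hμ : 0 < μ) {σ : Fin 3 → Fin 3 → ℝ} {α θ : Fin 3 → ℝ → ℝ}
    {k kx ks : Fin 3 → ℝ → ℝ → ℝ} {k₄ k₄x k₄s : ℝ → ℝ → ℝ}
    (hk : ∀ i, HasC1 (k i) (kx i) (ks i)) (hk₄ : HasC1 k₄ k₄x k₄s)
    (hkpde : ∀ i, ∀ x ξ : ℝ, 0 ≤ ξ → ξ ≤ x → x ≤ L →
      μ * kx i x ξ - γ i * ks i x ξ = (∑ j, σ j i * k j x ξ) + θ i ξ * k₄ x ξ)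
    (hk₄pde : ∀ x ξ : ℝ, 0 ≤ ξ → ξ ≤ x → x ≤ L →
      μ * k₄x x ξ + μ * k₄s x ξ = ∑ i, α i ξ * k i x ξ)
    (hkdiag : ∀ i, ∀ x : ℝ, 0 ≤ x → x ≤ L → k i x x = - θ i x / (γ i + μ))
    (hk₄bc : ∀ x : ℝ, 0 ≤ x → x ≤ L → μ * k₄ x 0 = ∑ j, γ j * δ j * k j x 0)
    {p : Fin 3 → ℝ → ℝ} {p₄ : ℝ → ℝ} (hp : ∀ i, Continuous (p i)) (hp₄ : Continuous p₄)
    (hD : 1 ≤ D) (hσD : ∀ i j, |σ i j| ≤ D) (hδD : ∀ i, |δ i| ≤ D) (hγD : ∀ i, γ i ≤ D)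
    (hαD : ∀ i x, 0 ≤ x → x ≤ L → |α i x| ≤ D)
    (hkD : ∀ i x ξ, 0 ≤ ξ → ξ ≤ x → x ≤ L → |k i x ξ| ≤ D)
    (hk₄D : ∀ x ξ, 0 ≤ ξ → ξ ≤ x → x ≤ L → |k₄ x ξ| ≤ D)
    (hpD : ∀ i x, 0 ≤ x → x ≤ L → |p i x| ≤ D)
    (hGD : ∀ x, 0 ≤ x → x ≤ L →
      |p₄ x - (∑ i, vol (k i) (p i) x) - vol k₄ p₄ x - ∑ i, γ i * δ i * k i x 0| ≤ D)
    (hκ : 0 < κ) (hκD : 4 * D ^ 2 * L ≤ κ) (hκμ : 3 ≤ κ * μ)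
    (hκγ : ∀ i, 3 + 75 * D ^ 2 ≤ κ * γ i)
    {u ut ux : Fin 3 → ℝ → ℝ → ℝ} {w wt wx : ℝ → ℝ → ℝ} {e : ℝ → ℝ}
    (hu : ∀ i, HasC1 (u i) (ut i) (ux i)) (hw : HasC1 w wt wx)
    (hupde : ∀ i t x, 0 ≤ t → 0 ≤ x → x ≤ L → ut i t x + γ i * ux i t x
      = (∑ j, σ i j * u j t x) + α i x * w t x + p i x * e t)
    (hwpde : ∀ t x, 0 ≤ t → 0 ≤ x → x ≤ L → wt t x - μ * wx t x
      = (∑ j, θ j x * u j t x) + p₄ x * e t)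
    (hu0 : ∀ i t, 0 ≤ t → u i t 0 = δ i * (w t 0 + e t))
    (hwL : ∀ t, 0 ≤ t → w t L = (∑ i, vol (k i) (u i t) L) + vol k₄ (w t) L) :
    ∃ z : ℝ → ℝ → ℝ, (∀ t, Continuous (z t)) ∧
      (∀ t x, z t x = w t x - (∑ i, vol (k i) (u i t) x) - vol k₄ (w t) x) ∧
      ∀ t, 0 ≤ t → ∃ Z' H' : ℝ,
        HasDerivAt (fun τ => wnorm L (-κ) (z τ)) Z' t ∧
        HasDerivAt (fun τ => ∑ i, wnorm L κ (u i τ)) H' t ∧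
        Z' ≤ -μ * z t 0 ^ 2 - 2 * wnorm L (-κ) (z t)
          + Real.exp (|-κ - κ| * L) * (D ^ 2 * L) * e t ^ 2 ∧
        H' ≤ 6 * D ^ 3 * z t 0 ^ 2 + (6 * D ^ 3 + 15 * D ^ 2 * L) * e t ^ 2
          - 2 * (∑ i, wnorm L κ (u i t)) + 240 * D ^ 2 * wnorm L (-κ) (z t) := by
  have hV := fun i => hasC1_vol (hk i) (hu i).cont (hu i).contt (hu i).ht
  have hz := (hw.sub (HasC1.sum (s := Finset.univ) hV)).sub
    (hasC1_vol hk₄ hw.cont hw.contt hw.ht)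
  have hzc : ∀ t, Continuous fun x => w t x - (∑ i, vol (k i) (u i t) x) - vol k₄ (w t) x :=
    fun t => cont_right
      (φ := fun t x => w t x - (∑ i, vol (k i) (u i t) x) - vol k₄ (w t) x) hz.cont t
  refine ⟨fun t x => w t x - (∑ i, vol (k i) (u i t) x) - vol k₄ (w t) x, hzc,
    fun t x => rfl, ?_⟩
  intro t ht
  have cz := hzc t
  have czt := cont_right
    (φ := fun t x => wt t x - (∑ i, vol (k i) (ut i t) x) - vol k₄ (wt t) x) hz.contt t
  have czx := cont_right (φ := fun t x => wx t x
    - (∑ i, (k i x x * u i t x + vol (kx i) (u i t) x))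
    - (k₄ x x * w t x + vol k₄x (w t) x)) hz.contx t
  have hz0 : w t 0 - (∑ i, vol (k i) (u i t) 0) - vol k₄ (w t) 0 = w t 0 := by
    simp [vol_zero]
  have hzL : w t L - (∑ i, vol (k i) (u i t) L) - vol k₄ (w t) L = 0 := by
    rw [hwL t ht]; ring
  obtain ⟨Z', hZ', hZle⟩ := energy_left hL hκμ hz t
  have hS := wnorm_le_two (φ := fun x => (wt t x - (∑ i, vol (k i) (ut i t) x) - vol k₄ (wt t) x)
      + (-μ) * (wx t x - (∑ i, (k i x x * u i t x + vol (kx i) (u i t) x))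
          - (k₄ x x * w t x + vol k₄x (w t) x))) hL κ (by fun_prop)
      (continuous_const (y := e t)) (continuous_const (y := (0:ℝ))) (D ^ 2) 0 (by
    intro x h0 h1
    have := controller_target (p₄ := p₄) (p := p) (u := fun j => u j t) (ut := fun j => ut j t)
      (ux := fun j => ux j t) (w := w t) (wt := wt t) (wx := wx t) (e := e t)
      hγ hμ hk hk₄ hkpde hk₄pde hkdiag hk₄bc (fun i => (hu i).hx t)
      (fun i => cont_right (hu i).contt t) (fun i => cont_right (hu i).contx t) (hw.hx t)
      (cont_right hw.contt t) (cont_right hw.contx t) hp hp₄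
      (fun i x h0 h1 => hupde i t x ht h0 h1) (fun x h0 h1 => hwpde t x ht h0 h1)
      (fun i => hu0 i t ht) h0 h1
    rw [this]
    have := sq_mul_le (hGD x h0 h1) (e t)
    linarith)
  have hS1 := wnorm_const hL hκ.le (e t)
  have hS2 := mul_le_mul_of_nonneg_left hS1 (by positivity : 0 ≤ D ^ 2)
  have hS3 := mul_le_mul_of_nonneg_left (hS.trans (add_le_add_left hS2 _))
    (Real.exp_nonneg (|-κ - κ| * L))
  have cu := fun i => cont_right (hu i).cont t
  have cw := cont_right hw.cont t
  have hwle := observer_w_le hL hκD (fun i => (hk i).cont) hk₄.cont hkD hk₄D cu cw cz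
    (fun x => rfl)
  have hZw := wnorm_anti hL (by linarith : -κ ≤ κ) cz
  have hD2 : 0 ≤ 5 * D ^ 2 := by positivity
  have hR : ∀ i, wnorm L κ (fun x => ut i t x + γ i * ux i t x)
      ≤ 75 * D ^ 2 / 3 * (∑ j, wnorm L κ (u j t)) + (80 * D ^ 2 * wnorm L (-κ)
        (fun x => w t x - (∑ i, vol (k i) (u i t) x) - vol k₄ (w t) x)
        + 5 * D ^ 2 * (L * e t ^ 2)) := by
    intro i
    have h1 := cont_right (hu i).contt t
    have h2 := cont_right (hu i).contx t
    have h3 := observer_rhs_le (e := e t) (u := fun j => u j t) (p := p i)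
      (R := fun x => ut i t x + γ i * ux i t x) hL hκ (hσD i) (hαD i) (hpD i)
      cu cw (by fun_prop) (fun x h0 h1 => hupde i t x ht h0 h1)
    have h4 := mul_le_mul_of_nonneg_left hwle hD2
    have h5 := mul_le_mul_of_nonneg_left hZw hD2
    linarith
  obtain ⟨H', hH', hHle⟩ := energy_family hL hκγ hu t hR
  refine ⟨Z', H', hZ', hH', ?_, ?_⟩
  · simp only [hzL] at hZle
    linarith
  · have hb : ∀ i, γ i * u i t 0 ^ 2 ≤ 2 * D ^ 3 * (w t 0 ^ 2 + e t ^ 2) := by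
      intro i
      have h1 := sq_mul_le (hδD i) (w t 0 + e t)
      rw [hu0 i t ht]
      have h2 : (w t 0 + e t) ^ 2 ≤ 2 * (w t 0 ^ 2 + e t ^ 2) := by
        linarith [sq_nonneg (w t 0 - e t)]
      calc γ i * (δ i * (w t 0 + e t)) ^ 2 ≤ D * (D ^ 2 * (2 * (w t 0 ^ 2 + e t ^ 2))) := by
            refine mul_le_mul (hγD i) (h1.trans ?_) (sq_nonneg _) (by linarith)
            exact mul_le_mul_of_nonneg_left h2 (by positivity)
        _ = _ := by ring
    have hb0 := hb 0
    have hb1 := hb 1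
    have hb2 := hb 2
    have hpos : 0 ≤ Real.exp (-κ * L) * ∑ i, γ i * u i t L ^ 2 :=
      mul_nonneg (Real.exp_nonneg _) (Finset.sum_nonneg fun i _ =>
        mul_nonneg (hγ i).le (sq_nonneg _))
    have hsum : ∑ i, γ i * u i t 0 ^ 2 ≤ 6 * D ^ 3 * (w t 0 ^ 2 + e t ^ 2) := by
      rw [Fin.sum_univ_three]; linarith
    simp only [hz0]
    linarith

/-! ### Equivalence of the original and the target coordinates -/

theorem wnorm_add_three {L : ℝ} (hL : 0 ≤ L) (κ : ℝ) {φ f g h : ℝ → ℝ} (hφ : Continuous φ)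
    (hf : Continuous f) (hg : Continuous g) (hh : Continuous h)
    (e : ∀ x, 0 ≤ x → x ≤ L → φ x = f x + g x + h x) :
    wnorm L κ φ ≤ 3 * wnorm L κ f + 3 * wnorm L κ g + 3 * wnorm L κ h := by
  have := wnorm_le_three (ψ := fun _ => f) hL κ hφ (fun _ => hf) hg hh 1 3 3 (by
    intro x h0 h1
    rw [e x h0 h1]
    simp
    nlinarith [sq_nonneg (f x - g x), sq_nonneg (f x - h x), sq_nonneg (g x - h x)])
  simpa using this

theorem wnorm_sub_two {L : ℝ} (hL : 0 ≤ L) (κ : ℝ) {φ f g : ℝ → ℝ} (hφ : Continuous φ)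
    (hf : Continuous f) (hg : Continuous g)
    (e : ∀ x, 0 ≤ x → x ≤ L → φ x = f x - g x) :
    wnorm L κ φ ≤ 2 * wnorm L κ f + 2 * wnorm L κ g :=
  wnorm_le_two hL κ hφ hf hg 2 2 (by
    intro x h0 h1
    rw [e x h0 h1]
    nlinarith [sq_nonneg (f x + g x)])

/-- The plant and observer states are equivalent, in norm, to the backstepping coordinates
`a`, `b`, `z` together with `hu`. -/
theorem target_equiv {L κ D : ℝ} (hL : 0 ≤ L) (hκ : 0 < κ) (hκD : 4 * D ^ 2 * L ≤ κ)
    {k m : Fin 3 → ℝ → ℝ → ℝ} {k₄ m₄ : ℝ → ℝ → ℝ}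
    (hk : ∀ i, Continuous fun p : ℝ × ℝ => k i p.1 p.2)
    (hk₄ : Continuous fun p : ℝ × ℝ => k₄ p.1 p.2)
    (hm : ∀ i, Continuous fun p : ℝ × ℝ => m i p.1 p.2)
    (hm₄ : Continuous fun p : ℝ × ℝ => m₄ p.1 p.2)
    (hkD : ∀ i x ξ, 0 ≤ ξ → ξ ≤ x → x ≤ L → |k i x ξ| ≤ D)
    (hk₄D : ∀ x ξ, 0 ≤ ξ → ξ ≤ x → x ≤ L → |k₄ x ξ| ≤ D)
    (hmD : ∀ i x ξ, 0 ≤ ξ → ξ ≤ x → x ≤ L → |m i x ξ| ≤ D)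
    (hm₄D : ∀ x ξ, 0 ≤ ξ → ξ ≤ x → x ≤ L → |m₄ x ξ| ≤ D)
    {u hu a : Fin 3 → ℝ → ℝ} {w hw b z : ℝ → ℝ}
    (cu : ∀ i, Continuous (u i)) (chu : ∀ i, Continuous (hu i)) (ca : ∀ i, Continuous (a i))
    (cw : Continuous w) (chw : Continuous hw) (cb : Continuous b) (cz : Continuous z)
    (hwb : ∀ x, 0 ≤ x → x ≤ L → w x - hw x = b x + vol m₄ b x)
    (hua : ∀ i x, u i x - hu i x = a i x + vol (m i) b x)
    (hz : ∀ x, z x = hw x - (∑ i, vol (k i) (hu i) x) - vol k₄ hw x) {S : ℝ}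
    (hS : S = (∑ i, wnorm L κ (u i)) + wnorm L κ w + (∑ i, wnorm L κ (hu i)) + wnorm L κ hw) :
    (∑ i, wnorm L κ (a i)) ≤ 12 * S ∧
    wnorm L (-κ) b ≤ 8 * Real.exp (|-κ - κ| * L) * S ∧
    wnorm L (-κ) z ≤ 7 * Real.exp (|-κ - κ| * L) * S ∧
    S ≤ 64 * ((∑ i, wnorm L κ (a i)) + wnorm L (-κ) b + wnorm L (-κ) z
      + ∑ i, wnorm L κ (hu i)) := by
  have cmb := fun i => continuous_vol' (hm i) cb
  have cm₄b := continuous_vol' hm₄ cb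
  have ckh := fun i => continuous_vol' (hk i) (chu i)
  have ck₄h := continuous_vol' hk₄ chw
  have nu := fun i => wnorm_nonneg hL κ (u i)
  have nhu := fun i => wnorm_nonneg hL κ (hu i)
  have na := fun i => wnorm_nonneg hL κ (a i)
  have nw := wnorm_nonneg hL κ w
  have nhw := wnorm_nonneg hL κ hw
  have nb := wnorm_nonneg hL (-κ) b
  have nz := wnorm_nonneg hL (-κ) z
  have vmb := fun i => wnorm_vol hL hκD (hm i) (hmD i) cb
  have vm₄b := wnorm_vol hL hκD hm₄ hm₄D cb
  have vkh := fun i => wnorm_vol hL hκD (hk i) (hkD i) (chu i)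
  have vk₄h := wnorm_vol hL hκD hk₄ hk₄D chw
  have bN : wnorm L κ b ≤ 4 * wnorm L κ (fun x => w x - hw x) :=
    wnorm_resolvent hL hκD hm₄ hm₄D cb (by fun_prop) (Or.inl hwb)
  have wN := wnorm_sub_two (φ := fun x => w x - hw x) hL κ (by fun_prop) cw chw
    (fun _ _ _ => rfl)
  have aN := fun i => wnorm_sub_two (φ := a i) (f := fun x => u i x - hu i x) hL κ (ca i)
    (by fun_prop) (cmb i) (fun x _ _ => by rw [hua]; ring)
  have uN := fun i => wnorm_sub_two (φ := fun x => u i x - hu i x) hL κ (by fun_prop) (cu i)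
    (chu i) (fun _ _ _ => rfl)
  have uN' := fun i => wnorm_add_three (φ := u i) hL κ (cu i) (chu i) (ca i) (cmb i)
    (fun x _ _ => by linarith [hua i x])
  have wN' := wnorm_add_three (φ := w) hL κ cw chw cb cm₄b
    (fun x h0 h1 => by linarith [hwb x h0 h1])
  have hwN := observer_w_le hL hκD hk hk₄ hkD hk₄D chu chw cz hz
  have zN := wnorm_le_three hL κ cz ckh chw ck₄h 5 5 5 (by
    intro x h0 h1
    have := sq_sum3_le (c := fun _ => 1) (D := 1) (by simp) (fun i => vol (k i) (hu i) x)
    simp only [one_mul] at this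
    rw [hz]
    generalize (∑ i, vol (k i) (hu i) x) = X at *
    nlinarith [sq_nonneg (3 * hw x + X), sq_nonneg (3 * vol k₄ hw x - X),
      sq_nonneg (hw x + vol k₄ hw x)])
  have bW := wnorm_weight (κ := -κ) (κ' := κ) hL cb
  have zW := wnorm_weight (κ := -κ) (κ' := κ) hL cz
  have bA := wnorm_anti hL (by linarith : -κ ≤ κ) cb
  have zA := wnorm_anti hL (by linarith : -κ ≤ κ) cz
  simp only [Fin.sum_univ_three] at hS hwN zN ⊢
  have := nu 0; have := nu 1; have := nu 2
  have := nhu 0; have := nhu 1; have := nhu 2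
  have := na 0; have := na 1; have := na 2
  have bS : wnorm L κ b ≤ 8 * S := by linarith
  have zS : wnorm L κ z ≤ 7 * S := by linarith [vkh 0, vkh 1, vkh 2]
  refine ⟨?_, ?_, ?_, ?_⟩
  · linarith [vmb 0, vmb 1, vmb 2, aN 0, aN 1, aN 2, uN 0, uN 1, uN 2]
  · linarith [mul_le_mul_of_nonneg_left bS (Real.exp_nonneg (|-κ - κ| * L))]
  · linarith [mul_le_mul_of_nonneg_left zS (Real.exp_nonneg (|-κ - κ| * L))]
  · linarith [uN' 0, uN' 1, uN' 2, vmb 0, vmb 1, vmb 2]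

/-! ### Exponential stability -/

theorem output_feedback_exponential_stability
    (L : ℝ) (hL : 0 < L)
    (γ : Fin 3 → ℝ) (hγ : ∀ i, 0 < γ i)
    (μ : ℝ) (hμ : 0 < μ)
    (σ : Fin 3 → Fin 3 → ℝ) (δ : Fin 3 → ℝ) (ρ₁ ρ₂ : ℝ)
    (α θ : Fin 3 → ℝ → ℝ)
    (hα : ∀ i, ContinuousOn (α i) (Set.Icc 0 L))
    (hθ : ∀ i, ContinuousOn (θ i) (Set.Icc 0 L))
    -- controller kernels k₁,k₂,k₃,k₄ on T = {0 ≤ ξ ≤ x ≤ L}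
    (k : Fin 3 → ℝ → ℝ → ℝ) (k₄ : ℝ → ℝ → ℝ)
    (hkC1 : ∀ i, ContDiff ℝ 1 (Function.uncurry (k i)))
    (hk₄C1 : ContDiff ℝ 1 (Function.uncurry k₄))
    (hkpde : ∀ i, ∀ x ξ : ℝ, 0 ≤ ξ → ξ ≤ x → x ≤ L →
      μ * deriv (fun y => k i y ξ) x - γ i * deriv (fun s => k i x s) ξ
        = (∑ j, σ j i * k j x ξ) + θ i ξ * k₄ x ξ)
    (hk₄pde : ∀ x ξ : ℝ, 0 ≤ ξ → ξ ≤ x → x ≤ L →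
      μ * deriv (fun y => k₄ y ξ) x + μ * deriv (fun s => k₄ x s) ξ
        = ∑ i, α i ξ * k i x ξ)
    (hkdiag : ∀ i, ∀ x : ℝ, 0 ≤ x → x ≤ L → k i x x = - θ i x / (γ i + μ))
    (hk₄bc : ∀ x : ℝ, 0 ≤ x → x ≤ L → μ * k₄ x 0 = ∑ j, γ j * δ j * k j x 0)
    -- observer kernels m₁,m₂,m₃,m₄ on T
    (m : Fin 3 → ℝ → ℝ → ℝ) (m₄ : ℝ → ℝ → ℝ)
    (hmC1 : ∀ i, ContDiff ℝ 1 (Function.uncurry (m i)))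
    (hm₄C1 : ContDiff ℝ 1 (Function.uncurry m₄))
    (hmpde : ∀ i, ∀ x ξ : ℝ, 0 ≤ ξ → ξ ≤ x → x ≤ L →
      γ i * deriv (fun y => m i y ξ) x - μ * deriv (fun s => m i x s) ξ
        = (∑ j, σ i j * m j x ξ) + α i x * m₄ x ξ)
    (hm₄pde : ∀ x ξ : ℝ, 0 ≤ ξ → ξ ≤ x → x ≤ L →
      μ * deriv (fun y => m₄ y ξ) x + μ * deriv (fun s => m₄ x s) ξ
        = - ∑ j, θ j x * m j x ξ)
    (hmdiag : ∀ i, ∀ x : ℝ, 0 ≤ x → x ≤ L → m i x x = α i x / (γ i + μ))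
    (hm₄bc : ∀ ξ : ℝ, 0 ≤ ξ → ξ ≤ L → m₄ L ξ = ρ₁ * m 0 L ξ + ρ₂ * m 1 L ξ) :
    ∃ M > (0:ℝ), ∃ lam > (0:ℝ),
      ∀ (u hu : Fin 3 → ℝ → ℝ → ℝ) (w hw : ℝ → ℝ → ℝ) (U y : ℝ → ℝ),
        (∀ i, ContDiff ℝ 1 (Function.uncurry (u i))) →
        ContDiff ℝ 1 (Function.uncurry w) →
        (∀ i, ContDiff ℝ 1 (Function.uncurry (hu i))) →
        ContDiff ℝ 1 (Function.uncurry hw) →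
        -- plant interior equations
        (∀ i, ∀ t x : ℝ, 0 ≤ t → 0 ≤ x → x ≤ L →
          deriv (fun τ => u i τ x) t + γ i * deriv (fun y' => u i t y') x
            = (∑ j, σ i j * u j t x) + α i x * w t x) →
        (∀ t x : ℝ, 0 ≤ t → 0 ≤ x → x ≤ L →
          deriv (fun τ => w τ x) t - μ * deriv (fun y' => w t y') x
            = ∑ j, θ j x * u j t x) →
        -- plant boundary conditions
        (∀ i, ∀ t : ℝ, 0 ≤ t → u i t 0 = δ i * w t 0) →
        (∀ t : ℝ, 0 ≤ t → w t L = ρ₁ * u 0 t L + ρ₂ * u 1 t L + U t) →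
        -- measured output
        (∀ t : ℝ, 0 ≤ t → y t = w t 0) →
        -- observer interior equations, with gains p_i(x) = −μ m_i(x,0)
        (∀ i, ∀ t x : ℝ, 0 ≤ t → 0 ≤ x → x ≤ L →
          deriv (fun τ => hu i τ x) t + γ i * deriv (fun y' => hu i t y') x
            = (∑ j, σ i j * hu j t x) + α i x * hw t x
              - (-μ * m i x 0) * (y t - hw t 0)) →
        (∀ t x : ℝ, 0 ≤ t → 0 ≤ x → x ≤ L →
          deriv (fun τ => hw τ x) t - μ * deriv (fun y' => hw t y') x
            = (∑ j, θ j x * hu j t x) - (-μ * m₄ x 0) * (y t - hw t 0)) →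
        -- observer boundary conditions
        (∀ i, ∀ t : ℝ, 0 ≤ t → hu i t 0 = δ i * y t) →
        (∀ t : ℝ, 0 ≤ t → hw t L = ρ₁ * hu 0 t L + ρ₂ * hu 1 t L + U t) →
        -- output-feedback control law
        (∀ t : ℝ, 0 ≤ t →
          U t = (∑ i, ∫ ξ in (0:ℝ)..L, k i L ξ * hu i t ξ)
              + (∫ ξ in (0:ℝ)..L, k₄ L ξ * hw t ξ)
              - ρ₁ * hu 0 t L - ρ₂ * hu 1 t L) →
        ∀ t : ℝ, 0 ≤ t →
          (∑ i, ∫ x in (0:ℝ)..L, (u i t x) ^ 2) + (∫ x in (0:ℝ)..L, (w t x) ^ 2)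
            + (∑ i, ∫ x in (0:ℝ)..L, (hu i t x) ^ 2)
            + (∫ x in (0:ℝ)..L, (hw t x) ^ 2)
          ≤ M * Real.exp (-lam * t) *
              ((∑ i, ∫ x in (0:ℝ)..L, (u i 0 x) ^ 2)
                + (∫ x in (0:ℝ)..L, (w 0 x) ^ 2)
                + (∑ i, ∫ x in (0:ℝ)..L, (hu i 0 x) ^ 2)
                + (∫ x in (0:ℝ)..L, (hw 0 x) ^ 2)) := by
  have hL0 := hL.le
  have Hk := fun i => HasC1.of_contDiff (hkC1 i)
  have Hk₄ := HasC1.of_contDiff hk₄C1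
  have Hm := fun i => HasC1.of_contDiff (hmC1 i)
  have Hm₄ := HasC1.of_contDiff hm₄C1
  have cp : ∀ i, Continuous fun x => μ * m i x 0 := fun i =>
    continuous_const.mul (cont_left (Hm i).cont 0)
  have cp₄ : Continuous fun x => μ * m₄ x 0 := continuous_const.mul (cont_left Hm₄.cont 0)
  have cG : Continuous fun x => μ * m₄ x 0 - (∑ i, vol (k i) (fun ξ => μ * m i ξ 0) x)
      - vol k₄ (fun ξ => μ * m₄ ξ 0) x - ∑ i, γ i * δ i * k i x 0 := by
    have c1 := fun i => continuous_vol' (Hk i).cont (cp i)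
    have c2 := continuous_vol' Hk₄.cont cp₄
    have c3 := fun i => cont_left (Hk i).cont 0
    fun_prop
  obtain ⟨D, hD1, hσD, hδD, hρ₁D, hρ₂D, hγD, hγD', hαD, hθD, hkD, hk₄D, hmD, hm₄D, hpD, hGD⟩ :=
    (((eventually_ge_atTop (1:ℝ)).and <|
      (eventually_all.2 fun i => eventually_all.2 fun j => eventually_ge_atTop |σ i j|).and <|
      (eventually_all.2 fun i => eventually_ge_atTop |δ i|).and <|
      (eventually_ge_atTop |ρ₁|).and <| (eventually_ge_atTop |ρ₂|).and <|
      (eventually_all.2 fun i => eventually_ge_atTop (γ i)).and <|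
      (eventually_all.2 fun i => eventually_le_mul (c := 1) (hγ i)).and <|
      (eventually_all.2 fun i => eventually_abs_le (hα i)).and <|
      (eventually_all.2 fun i => eventually_abs_le (hθ i)).and <|
      (eventually_all.2 fun i => eventually_abs_kernel_le (L := L) (Hk i).cont).and <|
      (eventually_abs_kernel_le (L := L) Hk₄.cont).and <|
      (eventually_all.2 fun i => eventually_abs_kernel_le (L := L) (Hm i).cont).and <|
      (eventually_abs_kernel_le (L := L) Hm₄.cont).and <|
      (eventually_all.2 fun i => eventually_abs_le (L := L) (cp i).continuousOn).and <|
      eventually_abs_le (L := L) cG.continuousOn)).exists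
  obtain ⟨κ, hκ, hκD, hκμ, hκγ, hκγ'⟩ :=
    ((eventually_gt_atTop (0:ℝ)).and <| (eventually_ge_atTop (4 * D ^ 2 * L)).and <|
      (eventually_le_mul (c := 3) hμ).and <|
      (eventually_all.2 fun i => eventually_le_mul (c := 3 + 48 * D ^ 2) (hγ i)).and <|
      eventually_all.2 fun i => eventually_le_mul (c := 3 + 75 * D ^ 2) (hγ i)).exists
  have hD0 : 0 ≤ D := by linarith
  obtain ⟨p, q, r, hp, hq, hr, hpqr⟩ := exists_weights
    (c₁ := Real.exp (-κ * L)) (c₂ := μ * Real.exp (κ * L) * (2 * D ^ 3))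
    (c₃ := Real.exp (|-κ - κ| * L) * (12 * D ^ 2)) (c₄ := Real.exp (|-κ - κ| * L) * (D ^ 2 * L))
    (c₅ := 6 * D ^ 3) (c₆ := 6 * D ^ 3 + 15 * D ^ 2 * L) (c₇ := 240 * D ^ 2) hμ
    (by positivity) (by positivity) (by positivity) (by positivity) (by positivity)
    (by positivity) (by positivity)
  have hM : 0 < 12 * p + 8 * Real.exp (|-κ - κ| * L) * q + 7 * Real.exp (|-κ - κ| * L) * r + 1 := by
    have := Real.exp_pos (|-κ - κ| * L)
    positivity
  refine ⟨Real.exp (|0 - κ| * L) * 64 *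
    (12 * p + 8 * Real.exp (|-κ - κ| * L) * q + 7 * Real.exp (|-κ - κ| * L) * r + 1),
    by positivity, 1, one_pos, ?_⟩
  intro u hu w hw U y huC hwC hhuC hhwC hupde hwpde hu0 hwL hy hhupde hhwpde hhu0 hhwL hU
  have Hu := fun i => HasC1.of_contDiff (huC i)
  have Hw := HasC1.of_contDiff hwC
  have Hhu := fun i => HasC1.of_contDiff (hhuC i)
  have Hhw := HasC1.of_contDiff hhwC
  obtain ⟨a, b, ca, cb, hwb, hua, hAB⟩ := error_cascade (ρ₁ := ρ₁) (ρ₂ := ρ₂) hL0 hγ hμ Hm Hm₄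
    hmpde hm₄pde hmdiag hm₄bc hD1 hσD hρ₁D hρ₂D hγD' hθD hmD hm₄D hκD hκμ hκγ
    (fun i => (Hu i).sub (Hhu i)) (Hw.sub Hhw)
    (by
      intro i t x ht h0 h1
      have e1 := hupde i t x ht h0 h1
      have e2 := hhupde i t x ht h0 h1
      rw [hy t ht] at e2
      simp only [Fin.sum_univ_three] at e1 e2 ⊢
      linear_combination e1 - e2)
    (by
      intro t x ht h0 h1
      have e1 := hwpde t x ht h0 h1
      have e2 := hhwpde t x ht h0 h1
      rw [hy t ht] at e2
      simp only [Fin.sum_univ_three] at e1 e2 ⊢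
      linear_combination e1 - e2)
    (by
      intro i t ht
      rw [hu0 i t ht, hhu0 i t ht, hy t ht, sub_self])
    (by
      intro t ht
      rw [hwL t ht, hhwL t ht]; ring)
  have hb0 : ∀ t, b t 0 = w t 0 - hw t 0 := fun t => by
    rw [hwb t 0 le_rfl hL0, vol_zero, add_zero]
  obtain ⟨z, cz, hz, hZH⟩ := observer_cascade (e := fun t => b t 0) hL0 hγ hμ Hk Hk₄ hkpde hk₄pde
    hkdiag hk₄bc cp cp₄ hD1 hσD hδD hγD hαD hkD hk₄D hpD hGD hκ hκD hκμ hκγ' Hhu Hhw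
    (by
      intro i t x ht h0 h1
      have e2 := hhupde i t x ht h0 h1
      rw [hy t ht] at e2
      rw [hb0]
      linear_combination e2)
    (by
      intro t x ht h0 h1
      have e2 := hhwpde t x ht h0 h1
      rw [hy t ht] at e2
      rw [hb0]
      linear_combination e2)
    (by
      intro i t ht
      rw [hhu0 i t ht, hy t ht, hb0]; ring)
    (by
      intro t ht
      rw [hhwL t ht, hU t ht]
      unfold vol
      ring)
  have hdecay := fun t (ht : 0 ≤ t) => exp_decay
    (V := fun τ => p * (∑ i, wnorm L κ (a i τ)) + q * wnorm L (-κ) (b τ) + r * wnorm L (-κ) (z τ)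
      + ∑ i, wnorm L κ (hu i τ)) (by
    intro t ht
    obtain ⟨A', B', hA', hB', iA, iB⟩ := hAB t ht
    obtain ⟨Z', H', hZ', hH', iZ, iH⟩ := hZH t ht
    refine ⟨p * A' + q * B' + r * Z' + H',
      (((hA'.const_mul p).add (hB'.const_mul q)).add (hZ'.const_mul r)).add hH', ?_⟩
    exact hpqr _ _ _ _ _ _ _ _ _ _ _ (Finset.sum_nonneg fun i _ => wnorm_nonneg hL0 κ _)
      (wnorm_nonneg hL0 _ _) (wnorm_nonneg hL0 _ _)
      (Finset.sum_nonneg fun i _ => wnorm_nonneg hL0 κ _)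
      (Finset.sum_nonneg fun i _ => mul_nonneg (hγ i).le (sq_nonneg _)) (sq_nonneg _)
      (sq_nonneg _) iA iB iZ iH) ht
  have cu := fun i t => cont_right (Hu i).cont t
  have chu := fun i t => cont_right (Hhu i).cont t
  have cw := fun t => cont_right Hw.cont t
  have chw := fun t => cont_right Hhw.cont t
  have hequiv := fun t => target_equiv hL0 hκ hκD (fun i => (Hk i).cont) Hk₄.cont
    (fun i => (Hm i).cont) Hm₄.cont hkD hk₄D hmD hm₄D (fun i => cu i t) (fun i => chu i t)
    (fun i => ca i t) (cw t) (chw t) (cb t) (cz t) (hwb t) (fun i x => hua i t x) (hz t) rfl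
  have h0 : ∀ φ : ℝ → ℝ, ∫ x in (0:ℝ)..L, φ x ^ 2 = wnorm L 0 φ := fun φ => by simp [wnorm]
  intro t ht
  simp only [h0]
  obtain ⟨-, -, -, hdown⟩ := hequiv t
  obtain ⟨hA, hB, hZ, -⟩ := hequiv 0
  have hdec := hdecay t ht
  -- passing from the weight `exp (-κ x)` to the unweighted norm at time `t`, and back at time `0`
  have t1 := fun i => wnorm_weight (κ := 0) (κ' := κ) hL0 (cu i t)
  have t2 := fun i => wnorm_weight (κ := 0) (κ' := κ) hL0 (chu i t)
  have t3 := wnorm_weight (κ := 0) (κ' := κ) hL0 (cw t)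
  have t4 := wnorm_weight (κ := 0) (κ' := κ) hL0 (chw t)
  have s1 := fun i => wnorm_anti hL0 hκ.le (cu i 0)
  have s2 := fun i => wnorm_anti hL0 hκ.le (chu i 0)
  have s3 := wnorm_anti hL0 hκ.le (cw 0)
  have s4 := wnorm_anti hL0 hκ.le (chw 0)
  have nA : 0 ≤ ∑ i, wnorm L κ (a i t) := Finset.sum_nonneg fun i _ => wnorm_nonneg hL0 κ _
  have nB := wnorm_nonneg hL0 (-κ) (b t)
  have nZ := wnorm_nonneg hL0 (-κ) (z t)
  have nu := fun i => wnorm_nonneg hL0 κ (u i 0)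
  have nw := wnorm_nonneg hL0 κ (w 0)
  have nhw := wnorm_nonneg hL0 κ (hw 0)
  have hexp : -1 * t = -t := by ring
  rw [hexp]
  have hA' := mul_le_mul_of_nonneg_left hA (by linarith : 0 ≤ p)
  have hB' := mul_le_mul_of_nonneg_left hB (by linarith : 0 ≤ q)
  have hZ' := mul_le_mul_of_nonneg_left hZ (by linarith : 0 ≤ r)
  have nA' := mul_le_mul_of_nonneg_right hp nA
  have nB' := mul_le_mul_of_nonneg_right hq nB
  have nZ' := mul_le_mul_of_nonneg_right hr nZ
  have hH : ∑ i, wnorm L κ (hu i 0) ≤ (∑ i, wnorm L κ (u i 0)) + wnorm L κ (w 0)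
      + (∑ i, wnorm L κ (hu i 0)) + wnorm L κ (hw 0) := by
    have : 0 ≤ ∑ i, wnorm L κ (u i 0) := Finset.sum_nonneg fun i _ => nu i
    linarith
  have hT : (∑ i, wnorm L 0 (u i t)) + wnorm L 0 (w t) + (∑ i, wnorm L 0 (hu i t))
      + wnorm L 0 (hw t) ≤ Real.exp (|0 - κ| * L) * ((∑ i, wnorm L κ (u i t)) + wnorm L κ (w t)
        + (∑ i, wnorm L κ (hu i t)) + wnorm L κ (hw t)) := by
    simp only [Fin.sum_univ_three]
    linarith [t1 0, t1 1, t1 2, t2 0, t2 1, t2 2]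
  have hS : (∑ i, wnorm L κ (u i 0)) + wnorm L κ (w 0) + (∑ i, wnorm L κ (hu i 0))
      + wnorm L κ (hw 0) ≤ (∑ i, wnorm L 0 (u i 0)) + wnorm L 0 (w 0)
        + (∑ i, wnorm L 0 (hu i 0)) + wnorm L 0 (hw 0) := by
    simp only [Fin.sum_univ_three]
    linarith [s1 0, s1 1, s1 2, s2 0, s2 1, s2 2]
  generalize Real.exp (|-κ - κ| * L) = E at *
  refine hT.trans ?_
  calc _ ≤ Real.exp (|0 - κ| * L) * (64 * (Real.exp (-t) *
        ((12 * p + 8 * E * q + 7 * E * r + 1) * ((∑ i, wnorm L κ (u i 0)) + wnorm L κ (w 0)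
          + (∑ i, wnorm L κ (hu i 0)) + wnorm L κ (hw 0))))) := by
        refine mul_le_mul_of_nonneg_left (hdown.trans ?_) (Real.exp_nonneg _)
        refine mul_le_mul_of_nonneg_left ?_ (by norm_num)
        refine le_trans (by linarith) (hdec.trans (mul_le_mul_of_nonneg_left ?_ (Real.exp_nonneg _)))
        linarith
    _ ≤ Real.exp (|0 - κ| * L) * (64 * (Real.exp (-t) *
        ((12 * p + 8 * E * q + 7 * E * r + 1) * ((∑ i, wnorm L 0 (u i 0)) + wnorm L 0 (w 0)
          + (∑ i, wnorm L 0 (hu i 0)) + wnorm L 0 (hw 0))))) := by gcongr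
    _ = _ := by ring
end

section
/- Let (u_1, u_2, u_3, w) be C¹ functions on [0,∞)×[0,L] satisfying the interior equations ∂_t u_i + γ_i ∂_x u_i = Σ_{j=1}^3 σ_{ij} u_j + α_i(x) w (i = 1,2,3) and ∂_t w − μ ∂_x w = Σ_{j=1}^3 θ_j(x) u_j, together with the left boundary condition u_i(t,0) = δ_i w(t,0) for all t ≥ 0. Define the backstepping variable χ(t,x) = w(t,x) − Σ_{i=1}^3 ∫_0^x k_i(x,ξ) u_i(t,ξ) dξ − ∫_0^x k_4(x,ξ) w(t,ξ) dξ. Then χ satisfies the pure transport equation ∂_t χ − μ ∂_x χ = 0 on [0,∞)×[0,L] and χ(t,0) = w(t,0) for all t ≥ 0. Moreover, if in addition w(t,L) = ρ_1 u_1(t,L) + ρ_2 u_2(t,L) + U(t) with U(t) = Σ_{i=1}^3 ∫_0^L k_i(L,ξ) u_i(t,ξ) dξ + ∫_0^L k_4(L,ξ) w(t,ξ) dξ − ρ_1 u_1(t,L) − ρ_2 u_2(t,L), then χ(t,L) = 0 for all t ≥ 0. -/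
/-!
Differentiating `χ` in `t` and `x` (Leibniz' rule, `hasDerivAt_integral_param` and
`hasDerivAt_integral_param_upper`) gives boundary terms at `ξ = x` and an integral over `[0, x]`.
After substituting the equations for the kernels and for `(u, w)`, all the zeroth-order couplings in
the integrand cancel and what remains is the exact derivative of
`Φ ξ = ∑ i, γ i * k i x ξ * u i t ξ - μ * k₄ x ξ * w t ξ`.
The value `Φ 0` vanishes by the boundary condition on `k₄ x 0` together with `u i t 0 = δ i * w t 0`,
and `Φ x` cancels the remaining boundary terms because `(γ i + μ) * k i x x = - θ i x`.
-/

section Leibniz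

variable {f g : ℝ → ℝ → ℝ}

theorem hasDerivAt_left (hf : ContDiff ℝ 1 (Function.uncurry f)) (a b : ℝ) :
    HasDerivAt (fun y => f y b) (deriv (fun y => f y b) a) a := by
  have h : ContDiff ℝ 1 (fun y => f y b) :=
    hf.comp (contDiff_id.prodMk contDiff_const)
  exact (h.differentiable one_ne_zero a).hasDerivAt

theorem hasDerivAt_right (hf : ContDiff ℝ 1 (Function.uncurry f)) (a b : ℝ) :
    HasDerivAt (fun s => f a s) (deriv (fun s => f a s) b) b := by
  have h : ContDiff ℝ 1 (fun s => f a s) :=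
    hf.comp (contDiff_const.prodMk contDiff_id)
  exact (h.differentiable one_ne_zero b).hasDerivAt

theorem continuous_deriv_left (hf : ContDiff ℝ 1 (Function.uncurry f)) :
    Continuous (fun p : ℝ × ℝ => deriv (fun y => f y p.2) p.1) := by
  have h : (fun p : ℝ × ℝ => deriv (fun y => f y p.2) p.1)
      = fun p => fderiv ℝ (Function.uncurry f) p (1, 0) := by
    ext ⟨a, b⟩
    have h1 := (hf.differentiable one_ne_zero (a, b)).hasFDerivAt
    have h2 : HasDerivAt (fun y : ℝ => (y, b)) ((1 : ℝ), (0 : ℝ)) a :=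
      (hasDerivAt_id a).prodMk (hasDerivAt_const a b)
    exact (h1.comp_hasDerivAt a h2).deriv
  rw [h]
  exact (hf.continuous_fderiv one_ne_zero).clm_apply continuous_const

theorem contDiff_slice_right (hf : ContDiff ℝ 1 (Function.uncurry f)) (a : ℝ) :
    ContDiff ℝ 1 (fun s => f a s) :=
  hf.comp (contDiff_const.prodMk contDiff_id)

/-- Differentiation under the integral sign; the dominating function is a constant, obtained from
compactness of `closedBall s₀ 1 × [[a, b]]`. -/
theorem hasDerivAt_integral_param_s3 (hf : ContDiff ℝ 1 (Function.uncurry f)) (a b s₀ : ℝ) :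
    HasDerivAt (fun s => ∫ ξ in a..b, f s ξ) (∫ ξ in a..b, deriv (fun s => f s ξ) s₀) s₀ := by
  have hc := continuous_deriv_left hf
  obtain ⟨C, hC⟩ := ((isCompact_closedBall s₀ 1).prod
    (isCompact_uIcc (a := a) (b := b))).exists_bound_of_continuousOn hc.continuousOn
  refine (intervalIntegral.hasDerivAt_integral_of_dominated_loc_of_deriv_le
    (bound := fun _ => C) (F' := fun s ξ => deriv (fun s => f s ξ) s)
    (Metric.closedBall_mem_nhds s₀ one_pos) ?_ ?_ ?_ ?_ ?_ ?_).2
  · exact Filter.Eventually.of_forall fun s =>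
      (contDiff_slice_right hf s).continuous.aestronglyMeasurable
  · exact (contDiff_slice_right hf s₀).continuous.intervalIntegrable _ _
  · exact (hc.comp (continuous_const.prodMk continuous_id)).aestronglyMeasurable
  · exact Filter.Eventually.of_forall fun ξ hξ s hs =>
      hC (s, ξ) ⟨hs, Set.uIoc_subset_uIcc hξ⟩
  · exact intervalIntegrable_const
  · exact Filter.Eventually.of_forall fun ξ _ s _ => hasDerivAt_left hf s ξ

/-- Leibniz' rule with the parameter also in the upper limit: the function
`(y, z) ↦ ∫ ξ in 0..z, f y ξ` has continuous partial derivatives, and the chain rule is applied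
along the diagonal. -/
theorem hasDerivAt_integral_param_upper (hf : ContDiff ℝ 1 (Function.uncurry f)) (x : ℝ) :
    HasDerivAt (fun y => ∫ ξ in (0 : ℝ)..y, f y ξ)
      ((∫ ξ in (0 : ℝ)..x, deriv (fun y => f y ξ) x) + f x x) x := by
  have hc := continuous_deriv_left hf
  have h := hasStrictFDerivAt_uncurry_coprod (𝕜 := ℝ) (u := (x, x))
    (f := fun y z => ∫ ξ in (0 : ℝ)..z, f y ξ)
    (f₁ := fun y z => ContinuousLinearMap.toSpanSingleton ℝ
      (∫ ξ in (0 : ℝ)..z, deriv (fun y => f y ξ) y))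
    (f₂ := fun y z => ContinuousLinearMap.toSpanSingleton ℝ (f y z))
    (Filter.Eventually.of_forall fun v => (hasDerivAt_integral_param_s3 hf 0 v.2 v.1).hasFDerivAt)
    (Filter.Eventually.of_forall fun v =>
      (intervalIntegral.integral_hasDerivAt_right
        ((contDiff_slice_right hf v.1).continuous.intervalIntegrable _ _)
        ((contDiff_slice_right hf v.1).continuous.stronglyMeasurableAtFilter _ _)
        (contDiff_slice_right hf v.1).continuous.continuousAt).hasFDerivAt)
    (by
      have h1 : Continuous fun p : ℝ × ℝ =>
          ∫ ξ in (0 : ℝ)..p.2, deriv (fun y => f y ξ) p.1 := by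
        refine intervalIntegral.continuous_parametric_intervalIntegral_of_continuous
          (f := fun (p : ℝ × ℝ) ξ => deriv (fun y => f y ξ) p.1) ?_ continuous_snd
        exact hc.comp ((continuous_fst.comp continuous_fst).prodMk continuous_snd)
      exact ((ContinuousLinearMap.toSpanSingletonCLE (𝕜 := ℝ) (E := ℝ)).continuous.comp
        h1).continuousAt)
    (((ContinuousLinearMap.toSpanSingletonCLE (𝕜 := ℝ) (E := ℝ)).continuous.comp
        hf.continuous).continuousAt)
  have h2 : HasDerivAt (fun y : ℝ => (y, y)) ((1 : ℝ), (1 : ℝ)) x :=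
    (hasDerivAt_id x).prodMk (hasDerivAt_id x)
  have h3 := HasFDerivAt.comp_hasDerivAt (f := fun y : ℝ => (y, y)) x h.hasFDerivAt h2
  simpa [Function.HasUncurry.uncurry, Function.comp_def] using h3

/-- The `t`-derivative of `∫ ξ in 0..x, f x ξ * g t ξ`. -/
theorem hasDerivAt_volterra_time (hf : ContDiff ℝ 1 (Function.uncurry f))
    (hg : ContDiff ℝ 1 (Function.uncurry g)) (t x : ℝ) :
    HasDerivAt (fun τ => ∫ ξ in (0 : ℝ)..x, f x ξ * g τ ξ)
      (∫ ξ in (0 : ℝ)..x, f x ξ * deriv (fun τ => g τ ξ) t) t := by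
  have h : ContDiff ℝ 1 (Function.uncurry fun τ ξ => f x ξ * g τ ξ) :=
    ((contDiff_slice_right hf x).comp contDiff_snd).mul hg
  convert hasDerivAt_integral_param_s3 h 0 x t using 3 with ξ
  exact ((hasDerivAt_left hg t ξ).const_mul _).deriv.symm

/-- The `x`-derivative of `∫ ξ in 0..x, f x ξ * g t ξ`. -/
theorem hasDerivAt_volterra_space (hf : ContDiff ℝ 1 (Function.uncurry f))
    (hg : ContDiff ℝ 1 (Function.uncurry g)) (t x : ℝ) :
    HasDerivAt (fun y => ∫ ξ in (0 : ℝ)..y, f y ξ * g t ξ)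
      ((∫ ξ in (0 : ℝ)..x, deriv (fun y => f y ξ) x * g t ξ) + f x x * g t x) x := by
  have h : ContDiff ℝ 1 (Function.uncurry fun y ξ => f y ξ * g t ξ) :=
    hf.mul ((contDiff_slice_right hg t).comp contDiff_snd)
  convert hasDerivAt_integral_param_upper h x using 4 with ξ
  exact ((hasDerivAt_left hf x ξ).mul_const _).deriv.symm

theorem continuous_mul_deriv_left (hf : ContDiff ℝ 1 (Function.uncurry f))
    (hg : ContDiff ℝ 1 (Function.uncurry g)) (a b : ℝ) :
    Continuous fun ξ => f a ξ * deriv (fun s => g s ξ) b :=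
  (contDiff_slice_right hf a).continuous.mul
    ((continuous_deriv_left hg).comp (continuous_const.prodMk continuous_id))

theorem hasDerivAt_mul_right (hf : ContDiff ℝ 1 (Function.uncurry f))
    (hg : ContDiff ℝ 1 (Function.uncurry g)) (a b ξ : ℝ) :
    HasDerivAt (fun s => f a s * g b s)
      (deriv (fun s => f a s) ξ * g b ξ + f a ξ * deriv (fun s => g b s) ξ) ξ :=
  (hasDerivAt_right hf a ξ).mul (hasDerivAt_right hg b ξ)

end Leibniz


/- STATEMENT 3: The backstepping variable χ defined from (u₁,u₂,u₃,w) via the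
controller kernels satisfies the pure transport equation ∂_t χ − μ ∂_x χ = 0,
with χ(t,0) = w(t,0); and under the control law, χ(t,L) = 0. -/

theorem backstepping_transform_target_transport
    (L : ℝ) (hL : 0 < L)
    (γ : Fin 3 → ℝ) (hγ : ∀ i, 0 < γ i)
    (μ : ℝ) (hμ : 0 < μ)
    (σ : Fin 3 → Fin 3 → ℝ) (δ : Fin 3 → ℝ) (ρ₁ ρ₂ : ℝ)
    (α θ : Fin 3 → ℝ → ℝ)
    (hα : ∀ i, ContinuousOn (α i) (Set.Icc 0 L))
    (hθ : ∀ i, ContinuousOn (θ i) (Set.Icc 0 L))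
    -- controller kernels k₁,k₂,k₃,k₄ on the triangle T = {0 ≤ ξ ≤ x ≤ L}
    (k : Fin 3 → ℝ → ℝ → ℝ) (k₄ : ℝ → ℝ → ℝ)
    (hkC1 : ∀ i, ContDiff ℝ 1 (Function.uncurry (k i)))
    (hk₄C1 : ContDiff ℝ 1 (Function.uncurry k₄))
    (hkpde : ∀ i, ∀ x ξ : ℝ, 0 ≤ ξ → ξ ≤ x → x ≤ L →
      μ * deriv (fun y => k i y ξ) x - γ i * deriv (fun s => k i x s) ξ
        = (∑ j, σ j i * k j x ξ) + θ i ξ * k₄ x ξ)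
    (hk₄pde : ∀ x ξ : ℝ, 0 ≤ ξ → ξ ≤ x → x ≤ L →
      μ * deriv (fun y => k₄ y ξ) x + μ * deriv (fun s => k₄ x s) ξ
        = ∑ i, α i ξ * k i x ξ)
    (hkdiag : ∀ i, ∀ x : ℝ, 0 ≤ x → x ≤ L → k i x x = - θ i x / (γ i + μ))
    (hk₄bc : ∀ x : ℝ, 0 ≤ x → x ≤ L → μ * k₄ x 0 = ∑ j, γ j * δ j * k j x 0)
    -- a C¹ solution of the interior equations with the left boundary condition
    (u : Fin 3 → ℝ → ℝ → ℝ) (w : ℝ → ℝ → ℝ)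
    (huC1 : ∀ i, ContDiff ℝ 1 (Function.uncurry (u i)))
    (hwC1 : ContDiff ℝ 1 (Function.uncurry w))
    (hupde : ∀ i, ∀ t x : ℝ, 0 ≤ t → 0 ≤ x → x ≤ L →
      deriv (fun τ => u i τ x) t + γ i * deriv (fun y => u i t y) x
        = (∑ j, σ i j * u j t x) + α i x * w t x)
    (hwpde : ∀ t x : ℝ, 0 ≤ t → 0 ≤ x → x ≤ L →
      deriv (fun τ => w τ x) t - μ * deriv (fun y => w t y) x
        = ∑ j, θ j x * u j t x)
    (hbc0 : ∀ i, ∀ t : ℝ, 0 ≤ t → u i t 0 = δ i * w t 0)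
    -- the backstepping variable
    (χ : ℝ → ℝ → ℝ)
    (hχ : ∀ t x : ℝ, χ t x
      = w t x - (∑ i, ∫ ξ in (0:ℝ)..x, k i x ξ * u i t ξ)
        - ∫ ξ in (0:ℝ)..x, k₄ x ξ * w t ξ) :
    -- χ satisfies the pure transport equation on [0,∞)×[0,L]
    (∀ t x : ℝ, 0 ≤ t → 0 ≤ x → x ≤ L →
      deriv (fun τ => χ τ x) t - μ * deriv (fun y => χ t y) x = 0)
    -- χ(t,0) = w(t,0)
    ∧ (∀ t : ℝ, 0 ≤ t → χ t 0 = w t 0)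
    -- if the right boundary condition holds with the backstepping control law,
    -- then χ(t,L) = 0
    ∧ (∀ U : ℝ → ℝ,
        (∀ t : ℝ, 0 ≤ t → w t L = ρ₁ * u 0 t L + ρ₂ * u 1 t L + U t) →
        (∀ t : ℝ, 0 ≤ t →
          U t = (∑ i, ∫ ξ in (0:ℝ)..L, k i L ξ * u i t ξ)
              + (∫ ξ in (0:ℝ)..L, k₄ L ξ * w t ξ)
              - ρ₁ * u 0 t L - ρ₂ * u 1 t L) →
        ∀ t : ℝ, 0 ≤ t → χ t L = 0) := by
  refine ⟨fun t x ht hx hxL => ?_, fun t _ => by simp [hχ], fun U hw hU t ht => ?_⟩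
  · have hdt : HasDerivAt (fun τ => χ τ x) (deriv (fun τ => w τ x) t
        - (∑ i, ∫ ξ in (0:ℝ)..x, k i x ξ * deriv (fun τ => u i τ ξ) t)
        - ∫ ξ in (0:ℝ)..x, k₄ x ξ * deriv (fun τ => w τ ξ) t) t := by
      simp only [hχ]
      exact ((hasDerivAt_left hwC1 t x).sub (HasDerivAt.fun_sum fun i _ =>
        hasDerivAt_volterra_time (hkC1 i) (huC1 i) t x)).sub
        (hasDerivAt_volterra_time hk₄C1 hwC1 t x)
    have hdx : HasDerivAt (fun y => χ t y) (deriv (fun y => w t y) x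
        - (∑ i, ((∫ ξ in (0:ℝ)..x, deriv (fun y => k i y ξ) x * u i t ξ) + k i x x * u i t x))
        - ((∫ ξ in (0:ℝ)..x, deriv (fun y => k₄ y ξ) x * w t ξ) + k₄ x x * w t x)) x := by
      simp only [hχ]
      exact ((hasDerivAt_right hwC1 t x).sub (HasDerivAt.fun_sum fun i _ =>
        hasDerivAt_volterra_space (hkC1 i) (huC1 i) t x)).sub
        (hasDerivAt_volterra_space hk₄C1 hwC1 t x)
    have cA : ∀ i, Continuous fun ξ => k i x ξ * deriv (fun τ => u i τ ξ) t := fun i =>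
      continuous_mul_deriv_left (hkC1 i) (huC1 i) x t
    have cB : ∀ i, Continuous fun ξ => deriv (fun y => k i y ξ) x * u i t ξ := fun i => by
      simpa only [mul_comm] using continuous_mul_deriv_left (huC1 i) (hkC1 i) t x
    have cA4 : Continuous fun ξ => k₄ x ξ * deriv (fun τ => w τ ξ) t :=
      continuous_mul_deriv_left hk₄C1 hwC1 x t
    have cB4 : Continuous fun ξ => deriv (fun y => k₄ y ξ) x * w t ξ := by
      simpa only [mul_comm] using continuous_mul_deriv_left hwC1 hk₄C1 t x
    have cI : ∀ i, Continuous fun ξ => μ * (deriv (fun y => k i y ξ) x * u i t ξ)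
        - k i x ξ * deriv (fun τ => u i τ ξ) t := fun i => ((cB i).const_mul μ).sub (cA i)
    have cI4 : Continuous fun ξ => μ * (deriv (fun y => k₄ y ξ) x * w t ξ)
        - k₄ x ξ * deriv (fun τ => w τ ξ) t := (cB4.const_mul μ).sub cA4
    have hsplit : (∫ ξ in (0:ℝ)..x,
          ((∑ i, (μ * (deriv (fun y => k i y ξ) x * u i t ξ)
            - k i x ξ * deriv (fun τ => u i τ ξ) t))
          + (μ * (deriv (fun y => k₄ y ξ) x * w t ξ) - k₄ x ξ * deriv (fun τ => w τ ξ) t)))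
        = (∑ i, (μ * (∫ ξ in (0:ℝ)..x, deriv (fun y => k i y ξ) x * u i t ξ)
            - ∫ ξ in (0:ℝ)..x, k i x ξ * deriv (fun τ => u i τ ξ) t))
          + (μ * (∫ ξ in (0:ℝ)..x, deriv (fun y => k₄ y ξ) x * w t ξ)
            - ∫ ξ in (0:ℝ)..x, k₄ x ξ * deriv (fun τ => w τ ξ) t) := by
      rw [intervalIntegral.integral_add
          ((continuous_finsetSum _ fun i _ => cI i).intervalIntegrable _ _)
          (cI4.intervalIntegrable _ _),
        intervalIntegral.integral_finsetSum fun i _ => (cI i).intervalIntegrable _ _,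
        intervalIntegral.integral_sub ((cB4.const_mul μ).intervalIntegrable _ _)
          (cA4.intervalIntegrable _ _), intervalIntegral.integral_const_mul]
      congr 1
      refine Finset.sum_congr rfl fun i _ => ?_
      rw [intervalIntegral.integral_sub (((cB i).const_mul μ).intervalIntegrable _ _)
          ((cA i).intervalIntegrable _ _), intervalIntegral.integral_const_mul]
    -- On `[0, x]` the interior equations turn the integrand into an exact derivative.
    have hexact := intervalIntegral.integral_eq_sub_of_hasDerivAt
      (f := fun ξ => (∑ i, γ i * (k i x ξ * u i t ξ)) - μ * (k₄ x ξ * w t ξ))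
      (f' := fun ξ => (∑ i, (μ * (deriv (fun y => k i y ξ) x * u i t ξ)
            - k i x ξ * deriv (fun τ => u i τ ξ) t))
          + (μ * (deriv (fun y => k₄ y ξ) x * w t ξ) - k₄ x ξ * deriv (fun τ => w τ ξ) t))
      (a := 0) (b := x) (fun ξ hξ => by
        rw [Set.uIcc_of_le hx] at hξ
        have h := (HasDerivAt.fun_sum (u := Finset.univ) fun i _ =>
          (hasDerivAt_mul_right (hkC1 i) (huC1 i) x t ξ).const_mul (γ i)).sub
          ((hasDerivAt_mul_right hk₄C1 hwC1 x t ξ).const_mul μ)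
        refine h.congr_deriv ?_
        have e1 := fun i => hkpde i x ξ hξ.1 hξ.2 hxL
        have e2 := hk₄pde x ξ hξ.1 hξ.2 hxL
        have e3 := fun i => hupde i t ξ ht hξ.1 (hξ.2.trans hxL)
        have e4 := hwpde t ξ ht hξ.1 (hξ.2.trans hxL)
        simp only [Fin.sum_univ_three] at e1 e2 e3 e4 ⊢
        linear_combination (-u 0 t ξ) * e1 0 - u 1 t ξ * e1 1 - u 2 t ξ * e1 2 - w t ξ * e2
          + k 0 x ξ * e3 0 + k 1 x ξ * e3 1 + k 2 x ξ * e3 2 + k₄ x ξ * e4)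
      (((continuous_finsetSum _ fun i _ => cI i).add cI4).intervalIntegrable _ _)
    rw [hsplit] at hexact
    have hdiag : ∀ i, (γ i + μ) * k i x x = - θ i x := fun i => by
      rw [hkdiag i x hx hxL]
      have := hγ i
      field_simp
    have hk0 := hk₄bc x hx hxL
    have hw0 := hwpde t x ht hx hxL
    rw [hdt.deriv, hdx.deriv]
    simp only [hbc0 _ t ht] at hexact
    simp only [Fin.sum_univ_three] at hexact hk0 hw0 ⊢
    linear_combination hexact + hw0 + w t 0 * hk0 + u 0 t x * hdiag 0 + u 1 t x * hdiag 1
      + u 2 t x * hdiag 2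
  · rw [hχ, hw t ht, hU t ht]
    ring
end
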